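/- arXiv:1806.02456 — 2 statements merged into one kernel-verified Lean document; each statement's English description precedes it below -/
import Mathlib

section
/- Suppose f ∈ H¹(I,ℝⁿ) with derivative f', let u_ε be the minimizer of E_ε over H¹(I,ℝⁿ) with derivative u_ε', and let p ∈ [1,2]. Then ∫_I |u_ε'|_ε^{p−2} ‖u_ε'‖² ≤ ∫_I |u_ε'|_ε^{p−2} (u_ε' · f'), and consequently ∫_I |u_ε'|_ε^{p−2} ‖u_ε'‖² ≤ ((p−1)/p) ∫_I |u_ε'|_ε^p + (1/p) ∫_I ‖f'‖^p. -/
open MeasureTheory Set Filter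
open scoped ENNReal

noncomputable section

/-- Square-integrability of `w` on the set `S`. -/
def SqIntOn {n : ℕ} (w : ℝ → EuclideanSpace ℝ (Fin n)) (S : Set ℝ) : Prop :=
  MeasureTheory.IntegrableOn (fun x => ‖w x‖ ^ 2) S

/-- `w` belongs to `H¹(I, ℝⁿ)` with (weak) derivative `w'`: it is continuous on `[a,b]`,
`w'` is square-integrable on `I = Ioo a b`, and the fundamental theorem of calculus holds. -/
def InH1 {n : ℕ} (a b : ℝ) (w w' : ℝ → EuclideanSpace ℝ (Fin n)) : Prop :=
  ContinuousOn w (Set.Icc a b) ∧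
  MeasureTheory.IntegrableOn (fun x => ‖w' x‖ ^ 2) (Set.Ioo a b) ∧
  ∀ x ∈ Set.Icc a b, ∀ y ∈ Set.Icc a b, w y - w x = ∫ t in x..y, w' t

/-- The regularized energy `E_ε` evaluated at `w ∈ H¹` with derivative `w'`. -/
def regEnergy {n : ℕ} (lam ε a b : ℝ) (f w w' : ℝ → EuclideanSpace ℝ (Fin n)) : ℝ :=
  ∫ x in Set.Ioo a b, ((1 / (2 * lam)) * ‖w x - f x‖ ^ 2
    + Real.sqrt (‖w' x‖ ^ 2 + ε ^ 2) + (ε ^ 2 / 2) * ‖w' x‖ ^ 2)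

/-- `u` (with derivative `u'`) minimizes `E_ε` over `H¹(I, ℝⁿ)`. -/
def IsMinimizerEps {n : ℕ} (lam ε a b : ℝ) (f u u' : ℝ → EuclideanSpace ℝ (Fin n)) : Prop :=
  InH1 a b u u' ∧ ∀ v v' : ℝ → EuclideanSpace ℝ (Fin n), InH1 a b v v' →
    regEnergy lam ε a b f u u' ≤ regEnergy lam ε a b f v v'

theorem aux_sqrt_pos {V : Type*} [NormedAddCommGroup V] {ε : ℝ} (hε : 0 < ε) (v : V) :
    0 < Real.sqrt (‖v‖ ^ 2 + ε ^ 2) := by positivity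

theorem aux_le_sqrt {V : Type*} [NormedAddCommGroup V] {ε : ℝ} (v : V) :
    ‖v‖ ≤ Real.sqrt (‖v‖ ^ 2 + ε ^ 2) := by
  apply Real.le_sqrt_of_sq_le; nlinarith [sq_nonneg ε]

theorem aux_eps_le_sqrt {V : Type*} [NormedAddCommGroup V] {ε : ℝ} (v : V) :
    ε ≤ Real.sqrt (‖v‖ ^ 2 + ε ^ 2) := by
  apply Real.le_sqrt_of_sq_le; nlinarith [sq_nonneg ‖v‖]

theorem aux_sqrt_le {V : Type*} [NormedAddCommGroup V] {ε : ℝ} (hε : 0 < ε) (v : V) :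
    Real.sqrt (‖v‖ ^ 2 + ε ^ 2) ≤ ‖v‖ + ε := by
  apply Real.sqrt_le_iff.2; constructor
  · positivity
  · nlinarith [norm_nonneg v, mul_nonneg (norm_nonneg v) hε.le]

/-- two radial maps with comonotone profiles -/
theorem aux_radial {V : Type*} [NormedAddCommGroup V] [InnerProductSpace ℝ V]
    (A B A' B' : ℝ) (v w : V) (hA : 0 ≤ A) (hB : 0 ≤ B) (hA' : 0 ≤ A') (hB' : 0 ≤ B')
    (h : 0 ≤ (A * ‖v‖ - A' * ‖w‖) * (B * ‖v‖ - B' * ‖w‖)) :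
    0 ≤ inner ℝ (A • v - A' • w) (B • v - B' • w) := by
  simp only [inner_sub_left, inner_sub_right, real_inner_smul_left, real_inner_smul_right,
    real_inner_self_eq_norm_sq, real_inner_comm v w]
  have h1 := real_inner_le_norm v w
  have h2 : 0 ≤ A * B' + A' * B := by positivity
  nlinarith [mul_le_mul_of_nonneg_left h1 h2, real_inner_comm v w]

theorem aux_prof1 {ε : ℝ} (hε : 0 < ε) {s t : ℝ} (hs : 0 ≤ s) (hst : s ≤ t) :
    1 / Real.sqrt (s ^ 2 + ε ^ 2) * s ≤ 1 / Real.sqrt (t ^ 2 + ε ^ 2) * t := by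
  have h1 : 0 < Real.sqrt (s ^ 2 + ε ^ 2) := by positivity
  have h2 : 0 < Real.sqrt (t ^ 2 + ε ^ 2) := by positivity
  rw [one_div_mul_eq_div, one_div_mul_eq_div, div_le_div_iff₀ h1 h2]
  have ht : 0 ≤ t := hs.trans hst
  apply le_of_sq_le_sq _ (by positivity)
  rw [mul_pow, mul_pow, Real.sq_sqrt (by positivity), Real.sq_sqrt (by positivity)]
  have : s ^ 2 ≤ t ^ 2 := by gcongr
  nlinarith [mul_le_mul_of_nonneg_right this (sq_nonneg ε)]

theorem aux_prof2 {ε : ℝ} (hε : 0 < ε) {p : ℝ} (hp : 1 ≤ p) {s t : ℝ} (hs : 0 ≤ s)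
    (hst : s ≤ t) :
    Real.sqrt (s ^ 2 + ε ^ 2) ^ (p - 2) * s ≤ Real.sqrt (t ^ 2 + ε ^ 2) ^ (p - 2) * t := by
  have key : ∀ r : ℝ, Real.sqrt (r ^ 2 + ε ^ 2) ^ (p - 2) * r
      = Real.sqrt (r ^ 2 + ε ^ 2) ^ (p - 1) * (1 / Real.sqrt (r ^ 2 + ε ^ 2) * r) := by
    intro r
    have h1 : 0 < Real.sqrt (r ^ 2 + ε ^ 2) := by positivity
    rw [show p - 2 = p - 1 - 1 by ring, Real.rpow_sub_one h1.ne']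
    ring
  rw [key, key]
  have := aux_prof1 hε hs hst
  gcongr

/-- The flux map. -/
def auxF {V : Type*} [NormedAddCommGroup V] [InnerProductSpace ℝ V] (ε : ℝ) (v : V) : V :=
  (1 / Real.sqrt (‖v‖ ^ 2 + ε ^ 2) + ε ^ 2) • v

/-- The weight map. -/
def auxP {V : Type*} [NormedAddCommGroup V] [InnerProductSpace ℝ V] (ε p : ℝ) (v : V) : V :=
  (Real.sqrt (‖v‖ ^ 2 + ε ^ 2) ^ (p - 2)) • v

theorem aux_mul_nonneg {s t x y x' y' : ℝ} (h1 : s ≤ t → x ≤ x') (h2 : s ≤ t → y ≤ y')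
    (h3 : t ≤ s → x' ≤ x) (h4 : t ≤ s → y' ≤ y) : 0 ≤ (x - x') * (y - y') := by
  rcases le_total s t with h | h
  · exact mul_nonneg_of_nonpos_of_nonpos (by linarith [h1 h]) (by linarith [h2 h])
  · exact mul_nonneg (by linarith [h3 h]) (by linarith [h4 h])

theorem aux_mono {V : Type*} [NormedAddCommGroup V] [InnerProductSpace ℝ V] {ε : ℝ} (hε : 0 < ε)
    {p : ℝ} (hp : 1 ≤ p) (v w : V) :
    0 ≤ inner ℝ (auxP ε p v - auxP ε p w) (auxF ε v - auxF ε w) := by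
  have h5 : ∀ s t : ℝ, 0 ≤ s → s ≤ t → (1 / Real.sqrt (s ^ 2 + ε ^ 2) + ε ^ 2) * s ≤
      (1 / Real.sqrt (t ^ 2 + ε ^ 2) + ε ^ 2) * t := by
    intro s t hs hst
    nlinarith [aux_prof1 hε hs hst, mul_le_mul_of_nonneg_left hst (sq_nonneg ε)]
  unfold auxP auxF
  apply aux_radial
  any_goals positivity
  exact aux_mul_nonneg (s := ‖v‖) (t := ‖w‖) (aux_prof2 hε hp (norm_nonneg v))
    (h5 _ _ (norm_nonneg v)) (aux_prof2 hε hp (norm_nonneg w)) (h5 _ _ (norm_nonneg w))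

theorem aux_strong {V : Type*} [NormedAddCommGroup V] [InnerProductSpace ℝ V] {ε : ℝ} (hε : 0 < ε)
    (v w : V) : ε ^ 2 * ‖v - w‖ ≤ ‖auxF ε v - auxF ε w‖ := by
  have h1 : 0 ≤ inner ℝ ((1 / Real.sqrt (‖v‖ ^ 2 + ε ^ 2)) • v
      - (1 / Real.sqrt (‖w‖ ^ 2 + ε ^ 2)) • w) ((1:ℝ) • v - (1:ℝ) • w) := by
    apply aux_radial
    any_goals positivity
    exact aux_mul_nonneg (s := ‖v‖) (t := ‖w‖) (aux_prof1 hε (norm_nonneg v))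
      (by simp) (aux_prof1 hε (norm_nonneg w)) (by simp)
  have h2 : auxF ε v - auxF ε w = ((1 / Real.sqrt (‖v‖ ^ 2 + ε ^ 2)) • v
      - (1 / Real.sqrt (‖w‖ ^ 2 + ε ^ 2)) • w) + ε ^ 2 • (v - w) := by
    unfold auxF; module
  have h3 : ε ^ 2 * ‖v - w‖ ^ 2 ≤ inner ℝ (auxF ε v - auxF ε w) (v - w) := by
    rw [h2, inner_add_left, real_inner_smul_left, real_inner_self_eq_norm_sq]
    simpa using h1
  have h4 := real_inner_le_norm (auxF ε v - auxF ε w) (v - w)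
  rcases eq_or_lt_of_le (norm_nonneg (v - w)) with h | h
  · rw [← h]; simp
  · nlinarith

theorem auxF_zero {V : Type*} [NormedAddCommGroup V] [InnerProductSpace ℝ V] {ε : ℝ} (hε : 0 < ε)
    (v : V) (h : auxF ε v = 0) : v = 0 := by
  unfold auxF at h
  rcases smul_eq_zero.1 h with h | h
  · have : 0 < (1 / Real.sqrt (‖v‖ ^ 2 + ε ^ 2) + ε ^ 2) := by positivity
    linarith
  · exact h

theorem auxF_cont {V : Type*} [NormedAddCommGroup V] [InnerProductSpace ℝ V] {ε : ℝ} (hε : 0 < ε) :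
    Continuous (auxF ε : V → V) := by
  unfold auxF
  have h : ∀ v : V, Real.sqrt (‖v‖ ^ 2 + ε ^ 2) ≠ 0 := fun v => (aux_sqrt_pos hε v).ne'
  fun_prop (disch := exact h _)

theorem auxP_contDiff {V : Type*} [NormedAddCommGroup V] [InnerProductSpace ℝ V] {ε : ℝ}
    (hε : 0 < ε) (p : ℝ) : ContDiff ℝ 1 (auxP ε p : V → V) := by
  unfold auxP
  apply ContDiff.smul _ contDiff_id
  apply ContDiff.rpow_const_of_ne
  · apply ContDiff.sqrt
    · exact (contDiff_norm_sq ℝ).add contDiff_const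
    · intro v; positivity
  · intro v; exact (aux_sqrt_pos hε v).ne'

/-- second order upper bound -/
theorem aux_upper {V : Type*} [NormedAddCommGroup V] [InnerProductSpace ℝ V] {ε : ℝ} (hε : 0 < ε)
    (v h : V) (t : ℝ) :
    Real.sqrt (‖v + t • h‖ ^ 2 + ε ^ 2) ≤ Real.sqrt (‖v‖ ^ 2 + ε ^ 2)
      + t * inner ℝ ((1 / Real.sqrt (‖v‖ ^ 2 + ε ^ 2)) • v) h + t ^ 2 * (1 / (2 * ε) * ‖h‖ ^ 2) := by
  have hA := aux_sqrt_pos hε v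
  have hA2 := Real.sq_sqrt (show 0 ≤ ‖v‖ ^ 2 + ε ^ 2 by positivity)
  have hAε := aux_eps_le_sqrt (ε := ε) v
  set A := Real.sqrt (‖v‖ ^ 2 + ε ^ 2)
  have h1 : ‖v + t • h‖ ^ 2 + ε ^ 2 = A ^ 2 + (2 * t * inner ℝ v h + t ^ 2 * ‖h‖ ^ 2) := by
    rw [norm_add_sq_real, hA2, real_inner_smul_right, norm_smul, mul_pow, Real.norm_eq_abs, sq_abs]
    ring
  rw [h1]
  have h0 : 0 ≤ A ^ 2 + (2 * t * inner ℝ v h + t ^ 2 * ‖h‖ ^ 2) := by rw [← h1]; positivity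
  set δ := (2 * t * inner ℝ v h + t ^ 2 * ‖h‖ ^ 2) with hδ
  have h2 : Real.sqrt (A ^ 2 + δ) ≤ A + δ / (2 * A) := by
    have h3 : (A + δ / (2 * A)) ^ 2 = A ^ 2 + δ + (δ / (2 * A)) ^ 2 := by field_simp; ring
    apply Real.sqrt_le_iff.2 ⟨_, by rw [h3]; nlinarith [sq_nonneg (δ / (2 * A))]⟩
    have : A + δ / (2 * A) = (A ^ 2 + (A ^ 2 + δ)) / (2 * A) := by field_simp; ring
    rw [this]; positivity
  have h4 : A + δ / (2 * A) = A + t * inner ℝ ((1 / A) • v) h + t ^ 2 * (1 / (2 * A) * ‖h‖ ^ 2) := by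
    rw [real_inner_smul_left, hδ]; field_simp; ring
  rw [h4] at h2
  have h5 : t ^ 2 * (1 / (2 * A) * ‖h‖ ^ 2) ≤ t ^ 2 * (1 / (2 * ε) * ‖h‖ ^ 2) := by gcongr
  linarith

theorem aux_quad {L C : ℝ} (h : ∀ t : ℝ, 0 ≤ t * L + t ^ 2 * C) : L = 0 := by
  by_contra hL
  have hC : 0 < |C| + 1 := by positivity
  have h1 := h (-(L / (2 * (|C| + 1))))
  have h2 : -(L / (2 * (|C| + 1))) * L + (-(L / (2 * (|C| + 1)))) ^ 2 * C
     ≤ -(L / (2 * (|C| + 1))) * L + (-(L / (2 * (|C| + 1)))) ^ 2 * (|C| + 1) := by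
    gcongr; linarith [le_abs_self C]
  have h3 : -(L / (2 * (|C| + 1))) * L + (-(L / (2 * (|C| + 1)))) ^ 2 * (|C| + 1)
    = - (L ^ 2 / (4 * (|C| + 1))) := by field_simp; ring
  have h4 : 0 < L ^ 2 / (4 * (|C| + 1)) := by positivity
  linarith

theorem aux_young {p x y : ℝ} (hp : 1 ≤ p) (hx : 0 < x) (hy : 0 ≤ y) :
    x ^ (p - 1) * y ≤ (p - 1) / p * x ^ p + 1 / p * y ^ p := by
  have hp0 : 0 < p := by linarith
  have := Real.geom_mean_le_arith_mean2_weighted (w₁ := (p - 1) / p) (w₂ := 1 / p)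
    (p₁ := x ^ p) (p₂ := y ^ p) (div_nonneg (by linarith) hp0.le) (by positivity) (by positivity)
    (by positivity) (by field_simp; ring)
  rw [← Real.rpow_mul hx.le, ← Real.rpow_mul hy] at this
  rwa [mul_div_cancel₀ _ hp0.ne', mul_div_cancel₀ _ hp0.ne', Real.rpow_one] at this

theorem aux_pow_le {p x : ℝ} (hp : 1 ≤ p) (hp2 : p ≤ 2) (hx : 0 ≤ x) : x ^ p ≤ 1 + x ^ 2 := by
  rcases le_total x 1 with h | h
  · have := Real.rpow_le_one hx h (by linarith : 0 ≤ p)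
    nlinarith [sq_nonneg x]
  · have := Real.rpow_le_rpow_of_exponent_le h hp2
    rw [Real.rpow_two] at this
    linarith

theorem aux_ibp {n : ℕ} {a b : ℝ} (P Q P' Q' : ℝ → EuclideanSpace ℝ (Fin n))
    (hP : ∀ i, AbsolutelyContinuousOnInterval (fun x => P x i) a b)
    (hQ : ∀ i, AbsolutelyContinuousOnInterval (fun x => Q x i) a b)
    (hP' : ∀ᵐ x, x ∈ uIcc a b → HasDerivAt P (P' x) x)
    (hQ' : ∀ᵐ x, x ∈ uIcc a b → HasDerivAt Q (Q' x) x) :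
    IntervalIntegrable (fun x => inner ℝ (P' x) (Q x) + inner ℝ (P x) (Q' x)) volume a b ∧
    ∫ x in a..b, (inner ℝ (P' x) (Q x) + inner ℝ (P x) (Q' x))
      = inner ℝ (P b) (Q b) - inner ℝ (P a) (Q a) := by
  have hh : AbsolutelyContinuousOnInterval (fun x => inner ℝ (P x) (Q x)) a b := by
    have : (fun x => inner ℝ (P x) (Q x)) = fun x => ∑ i, P x i * Q x i := by
      ext x; simp [PiLp.inner_apply, mul_comm]
    rw [this]
    have gen : ∀ s : Finset (Fin n),
        AbsolutelyContinuousOnInterval (fun x => ∑ i ∈ s, P x i * Q x i) a b := by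
      intro s
      induction s using Finset.induction_on with
      | empty =>
        simp only [Finset.sum_empty]
        exact (LipschitzWith.const (0:ℝ)).lipschitzOnWith.absolutelyContinuousOnInterval
      | insert i s hi ih =>
        simp only [Finset.sum_insert hi]
        exact ((hP i).fun_mul (hQ i)).fun_add ih
    exact gen _
  have hd : ∀ᵐ x, x ∈ uIcc a b → deriv (fun x => inner ℝ (P x) (Q x)) x
      = inner ℝ (P' x) (Q x) + inner ℝ (P x) (Q' x) := by
    filter_upwards [hP', hQ'] with x h1 h2 hx
    rw [((h1 hx).inner ℝ (h2 hx)).deriv, add_comm]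
  have hd' : ∀ᵐ x, x ∈ uIoc a b → deriv (fun x => inner ℝ (P x) (Q x)) x
      = inner ℝ (P' x) (Q x) + inner ℝ (P x) (Q' x) := by
    filter_upwards [hd] with x h hx using h (uIoc_subset_uIcc hx)
  constructor
  · refine hh.intervalIntegrable_deriv.congr_ae ?_
    exact (ae_restrict_iff' measurableSet_uIoc).2 hd'
  · rw [← intervalIntegral.integral_congr_ae hd', hh.integral_deriv_eq_sub]

theorem aux_prim {n : ℕ} {a b : ℝ} (c : EuclideanSpace ℝ (Fin n))
    (P' : ℝ → EuclideanSpace ℝ (Fin n)) (h : IntervalIntegrable P' volume a b) :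
    (∀ i, AbsolutelyContinuousOnInterval (fun x => (c + ∫ t in a..x, P' t) i) a b) ∧
    ∀ᵐ x, x ∈ uIcc a b → HasDerivAt (fun x => c + ∫ t in a..x, P' t) (P' x) x := by
  constructor
  · intro i
    have h1 : IntervalIntegrable (fun x => P' x i) volume a b :=
      ⟨(EuclideanSpace.proj (𝕜 := ℝ) i).integrable_comp h.1,
       (EuclideanSpace.proj (𝕜 := ℝ) i).integrable_comp h.2⟩
    have h2 := h1.absolutelyContinuousOnInterval_intervalIntegral (c := a) (by simp)
    have h3 : AbsolutelyContinuousOnInterval (fun x => c i + ∫ t in a..x, P' t i) a b :=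
      (LipschitzWith.const (c i)).lipschitzOnWith.absolutelyContinuousOnInterval.fun_add h2
    rw [absolutelyContinuousOnInterval_iff] at h3 ⊢
    intro e he
    obtain ⟨δ, hδ, H⟩ := h3 e he
    refine ⟨δ, hδ, fun E hE hs => ?_⟩
    convert H E hE hs using 1
    have key : ∀ x ∈ uIcc a b, (c + ∫ t in a..x, P' t) i = c i + ∫ t in a..x, P' t i := by
      intro x hx
      have hx' : IntervalIntegrable P' volume a x :=
        h.mono_set (uIcc_subset_uIcc (by simp) hx)
      have := (EuclideanSpace.proj i : EuclideanSpace ℝ (Fin n) →L[ℝ] ℝ).intervalIntegral_comp_comm hx'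
      simp only [PiLp.add_apply]
      congr 1
      exact this.symm
    apply Finset.sum_congr rfl
    intro j hj
    have hm := hE.1 j hj
    rw [key _ hm.1, key _ hm.2]
  · filter_upwards [h.ae_hasDerivAt_integral] with x hx hxx
    exact (hx hxx a (by simp)).const_add c
theorem aux_ii {n : ℕ} {a b : ℝ} (hab : a ≤ b) {w : ℝ → EuclideanSpace ℝ (Fin n)} :
    IntervalIntegrable w volume a b ↔ IntegrableOn w (Ioo a b) := by
  rw [intervalIntegrable_iff_integrableOn_Ioo_of_le hab]

theorem aux_int {a b : ℝ} (hab : a ≤ b) (g : ℝ → ℝ) :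
    ∫ x in a..b, g x = ∫ x in Ioo a b, g x := by
  rw [intervalIntegral.integral_of_le hab, integral_Ioc_eq_integral_Ioo]

theorem aux_memLp {n : ℕ} {a b : ℝ} {w w' : ℝ → EuclideanSpace ℝ (Fin n)} (h : InH1 a b w w')
    (hm : AEStronglyMeasurable w' (volume.restrict (Ioo a b))) :
    MemLp w' 2 (volume.restrict (Ioo a b)) :=
  (memLp_two_iff_integrable_sq_norm hm).2 h.2.1

theorem aux_memLp_int {n : ℕ} {a b : ℝ} {w' : ℝ → EuclideanSpace ℝ (Fin n)}
    (h : MemLp w' 2 (volume.restrict (Ioo a b))) : IntegrableOn w' (Ioo a b) :=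
  h.integrable (by norm_num)

theorem aux_meas_or_const {n : ℕ} {a b : ℝ} (hab : a < b) {w w' : ℝ → EuclideanSpace ℝ (Fin n)}
    (h : InH1 a b w w') :
    AEStronglyMeasurable w' (volume.restrict (Ioo a b)) ∨ ∀ x ∈ Icc a b, w x = w a := by
  by_cases hi : IntervalIntegrable w' volume a b
  · left
    exact ((aux_ii hab.le).1 hi).aestronglyMeasurable
  · right
    have ha : a ∈ Icc a b := ⟨le_rfl, hab.le⟩
    have hb : b ∈ Icc a b := ⟨hab.le, le_rfl⟩
    have h1 : w b = w a := by
      have := h.2.2 a ha b hb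
      rw [intervalIntegral.integral_undef hi] at this
      exact sub_eq_zero.1 this
    intro x hx
    by_cases h2 : IntervalIntegrable w' volume a x
    · by_cases h3 : IntervalIntegrable w' volume x b
      · exact absurd (h2.trans h3) hi
      · have := h.2.2 x hx b hb
        rw [intervalIntegral.integral_undef h3] at this
        rw [← h1]; exact (sub_eq_zero.1 this).symm
    · have := h.2.2 a ha x hx
      rw [intervalIntegral.integral_undef h2] at this
      exact sub_eq_zero.1 this

theorem aux_contInt {a b : ℝ} {g : ℝ → ℝ} (h : ContinuousOn g (Icc a b)) :
    IntegrableOn g (Ioo a b) :=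
  (h.integrableOn_Icc).mono_set Ioo_subset_Icc_self

theorem aux_sqrtInt {n : ℕ} {a b : ℝ} (ε : ℝ) {w' : ℝ → EuclideanSpace ℝ (Fin n)}
    (h : IntegrableOn (fun x => ‖w' x‖ ^ 2) (Ioo a b)) :
    IntegrableOn (fun x => Real.sqrt (‖w' x‖ ^ 2 + ε ^ 2)) (Ioo a b) := by
  have hc : IntegrableOn (fun _ : ℝ => 1 + ε ^ 2) (Ioo a b) := integrable_const _
  refine Integrable.mono' (h.add hc) ?_ ?_
  · exact Real.continuous_sqrt.comp_aestronglyMeasurable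
      (h.aestronglyMeasurable.add aestronglyMeasurable_const)
  · refine Eventually.of_forall fun x => ?_
    rw [Real.norm_of_nonneg (Real.sqrt_nonneg _)]
    apply Real.sqrt_le_iff.2
    simp only [Pi.add_apply]
    have : 0 ≤ ‖w' x‖ ^ 2 := by positivity
    have : 0 ≤ ε ^ 2 := by positivity
    constructor
    · positivity
    · nlinarith

theorem aux_enInt {n : ℕ} {a b : ℝ} (lam ε : ℝ) {f w w' : ℝ → EuclideanSpace ℝ (Fin n)}
    (hf : ContinuousOn f (Icc a b)) (hw : ContinuousOn w (Icc a b))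
    (h : IntegrableOn (fun x => ‖w' x‖ ^ 2) (Ioo a b)) :
    IntegrableOn (fun x => (1 / (2 * lam)) * ‖w x - f x‖ ^ 2
      + Real.sqrt (‖w' x‖ ^ 2 + ε ^ 2) + (ε ^ 2 / 2) * ‖w' x‖ ^ 2) (Ioo a b) := by
  refine Integrable.add (Integrable.add ?_ (aux_sqrtInt ε h)) (h.const_mul _)
  exact aux_contInt (by fun_prop)

/-- comparison with a locally constant competitor -/
theorem aux_zero {n : ℕ} {a b lam ε : ℝ} (hlam : 0 < lam) (hε : 0 < ε)
    {f u u' v : ℝ → EuclideanSpace ℝ (Fin n)} (hf : ContinuousOn f (Icc a b))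
    (hu : IsMinimizerEps lam ε a b f u u') (hv : InH1 a b v (fun _ => 0))
    (hle : ∀ x ∈ Ioo a b, ‖v x - f x‖ ≤ ‖u x - f x‖) :
    ∀ᵐ x ∂(volume.restrict (Ioo a b)), u' x = 0 := by
  have h1 := hu.2 v _ hv
  unfold regEnergy at h1
  have i1 := aux_enInt lam ε hf hu.1.1 hu.1.2.1
  have i2 := aux_enInt lam ε hf hv.1 hv.2.1
  have i3 : IntegrableOn (fun x => (ε ^ 2 / 2) * ‖u' x‖ ^ 2) (Ioo a b) := hu.1.2.1.const_mul _
  have h2 : ∫ x in Ioo a b, (ε ^ 2 / 2) * ‖u' x‖ ^ 2 ≤ 0 := by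
    have : ∫ x in Ioo a b, (ε ^ 2 / 2) * ‖u' x‖ ^ 2 ≤ ∫ x in Ioo a b,
        (((1 / (2 * lam)) * ‖u x - f x‖ ^ 2
      + Real.sqrt (‖u' x‖ ^ 2 + ε ^ 2) + (ε ^ 2 / 2) * ‖u' x‖ ^ 2) -
      ((1 / (2 * lam)) * ‖v x - f x‖ ^ 2
      + Real.sqrt (‖(0 : EuclideanSpace ℝ (Fin n))‖ ^ 2 + ε ^ 2)
        + (ε ^ 2 / 2) * ‖(0 : EuclideanSpace ℝ (Fin n))‖ ^ 2)) := by
      apply setIntegral_mono_on i3 (i1.sub i2) measurableSet_Ioo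
      intro x hx
      have e1 : (1 / (2 * lam)) * ‖v x - f x‖ ^ 2 ≤ (1 / (2 * lam)) * ‖u x - f x‖ ^ 2 := by
        have := hle x hx
        gcongr
      have e2 : Real.sqrt (‖(0 : EuclideanSpace ℝ (Fin n))‖ ^ 2 + ε ^ 2) ≤
          Real.sqrt (‖u' x‖ ^ 2 + ε ^ 2) := by
        apply Real.sqrt_le_sqrt
        simp only [norm_zero]; nlinarith [sq_nonneg ‖u' x‖]
      simp only [norm_zero, Pi.sub_apply, ne_eq, OfNat.ofNat_ne_zero, not_false_eq_true, zero_pow,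
        zero_add, mul_zero, add_zero] at e2 ⊢
      linarith
    rw [integral_sub i1 i2] at this
    linarith
  have h3 : ∫ x in Ioo a b, (ε ^ 2 / 2) * ‖u' x‖ ^ 2 = 0 :=
    le_antisymm h2 (integral_nonneg fun x => by positivity)
  rw [integral_eq_zero_iff_of_nonneg (fun x => by positivity) i3] at h3
  filter_upwards [h3] with x hx
  have hx' : ε ^ 2 / 2 * ‖u' x‖ ^ 2 = 0 := hx
  have : ‖u' x‖ ^ 2 = 0 := by
    rcases mul_eq_zero.1 hx' with h | h
    · have : 0 < ε ^ 2 / 2 := by positivity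
      linarith
    · exact h
  simpa using this

theorem aux_constH1 {n : ℕ} {a b : ℝ} {v : ℝ → EuclideanSpace ℝ (Fin n)}
    (h : ∀ x ∈ Icc a b, v x = v a) : InH1 a b v (fun _ => 0) := by
  refine ⟨?_, by simp, ?_⟩
  · exact continuousOn_const.congr h
  · intro x hx y hy
    simp [h x hx, h y hy]

theorem aux_meas {n : ℕ} {a b lam ε : ℝ} (hab : a < b) (hlam : 0 < lam) (hε : 0 < ε)
    {f u u' : ℝ → EuclideanSpace ℝ (Fin n)} (hf : ContinuousOn f (Icc a b))
    (hu : IsMinimizerEps lam ε a b f u u') :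
    AEStronglyMeasurable u' (volume.restrict (Ioo a b)) := by
  rcases aux_meas_or_const hab hu.1 with h | h
  · exact h
  · have := aux_zero hlam hε hf hu (aux_constH1 h) (fun x _ => le_rfl)
    exact AEStronglyMeasurable.congr (f := fun _ => 0) aestronglyMeasurable_const
      (by filter_upwards [this] with x hx using hx.symm)

theorem aux_primH1 {n : ℕ} {a b : ℝ} (hab : a < b) (c : EuclideanSpace ℝ (Fin n))
    {P' : ℝ → EuclideanSpace ℝ (Fin n)} (h : MemLp P' 2 (volume.restrict (Ioo a b))) :
    InH1 a b (fun x => c + ∫ t in a..x, P' t) P' := by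
  have hi := (aux_ii hab.le).2 (aux_memLp_int h)
  refine ⟨?_, h.integrable_norm_pow (by norm_num), ?_⟩
  · apply continuousOn_const.add
    have := intervalIntegral.continuousOn_primitive_interval' (b₁ := a) (b₂ := b) hi (a := a)
      (by simp)
    rwa [uIcc_of_le hab.le] at this
  · intro x hx y hy
    have hx' : IntervalIntegrable P' volume a x :=
      hi.mono_set (uIcc_subset_uIcc (by simp) (by rwa [uIcc_of_le hab.le]))
    have hy' : IntervalIntegrable P' volume a y :=
      hi.mono_set (uIcc_subset_uIcc (by simp) (by rwa [uIcc_of_le hab.le]))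
    rw [← intervalIntegral.integral_interval_sub_left hy' hx']
    simp

theorem aux_addH1 {n : ℕ} {a b : ℝ} (hab : a < b) {w w' v v' : ℝ → EuclideanSpace ℝ (Fin n)}
    (hw : InH1 a b w w') (hwm : AEStronglyMeasurable w' (volume.restrict (Ioo a b)))
    (hv : InH1 a b v v') (hvm : AEStronglyMeasurable v' (volume.restrict (Ioo a b))) (t : ℝ) :
    InH1 a b (fun x => w x + t • v x) (fun x => w' x + t • v' x) := by
  have l1 := aux_memLp hw hwm
  have l2 := aux_memLp hv hvm
  have i1 := (aux_ii hab.le).2 (aux_memLp_int l1)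
  have i2 := (aux_ii hab.le).2 (aux_memLp_int l2)
  refine ⟨hw.1.add (hv.1.const_smul t), (l1.add (l2.const_smul t)).integrable_norm_pow (by norm_num), ?_⟩
  intro x hx y hy
  have hs : uIcc x y ⊆ uIcc a b := by
    apply uIcc_subset_uIcc <;> rwa [uIcc_of_le hab.le]
  have i3 : IntervalIntegrable (fun s => t • v' s) volume x y := (i2.mono_set hs).smul t
  show w y + t • v y - (w x + t • v x) = ∫ s in x..y, (w' s + t • v' s)
  rw [intervalIntegral.integral_add (i1.mono_set hs) i3,
    intervalIntegral.integral_smul, ← hw.2.2 x hx y hy, ← hv.2.2 x hx y hy]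
  module

theorem aux_EL {n : ℕ} {a b lam ε : ℝ} (hab : a < b) (hlam : 0 < lam) (hε : 0 < ε)
    {f u u' ψ ψ' : ℝ → EuclideanSpace ℝ (Fin n)} (hf : ContinuousOn f (Icc a b))
    (hu : IsMinimizerEps lam ε a b f u u')
    (hψ : InH1 a b ψ ψ') (hψm : AEStronglyMeasurable ψ' (volume.restrict (Ioo a b)))
    (hl : IntegrableOn (fun x => inner ℝ ((1 / lam) • (u x - f x)) (ψ x)
      + inner ℝ (auxF ε (u' x)) (ψ' x)) (Ioo a b)) :
    ∫ x in Ioo a b, (inner ℝ ((1 / lam) • (u x - f x)) (ψ x)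
      + inner ℝ (auxF ε (u' x)) (ψ' x)) = 0 := by
  have hum := aux_meas hab hlam hε hf hu
  have i1 := aux_enInt lam ε hf hu.1.1 hu.1.2.1
  have ic : IntegrableOn (fun x => 1 / (2 * lam) * ‖ψ x‖ ^ 2
      + (1 / (2 * ε) + ε ^ 2 / 2) * ‖ψ' x‖ ^ 2) (Ioo a b) := by
    refine Integrable.add (aux_contInt ?_) (hψ.2.1.const_mul _)
    have := hψ.1
    fun_prop
  apply aux_quad (C := ∫ x in Ioo a b, (1 / (2 * lam) * ‖ψ x‖ ^ 2
      + (1 / (2 * ε) + ε ^ 2 / 2) * ‖ψ' x‖ ^ 2))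
  intro t
  have hadd := aux_addH1 hab hu.1 hum hψ hψm t
  have i2 := aux_enInt lam ε hf hadd.1 hadd.2.1
  have h1 := hu.2 _ _ hadd
  unfold regEnergy at h1
  have h2 := setIntegral_mono_on i2 ((i1.add (hl.const_mul t)).add (ic.const_mul (t ^ 2)))
    measurableSet_Ioo (by
      intro x hx
      have e1 := aux_upper hε (u' x) (ψ' x) t
      have e2 : ‖u' x + t • ψ' x‖ ^ 2 = ‖u' x‖ ^ 2 + 2 * t * inner ℝ (u' x) (ψ' x)
          + t ^ 2 * ‖ψ' x‖ ^ 2 := by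
        rw [norm_add_sq_real, real_inner_smul_right, norm_smul, mul_pow, Real.norm_eq_abs, sq_abs]
        ring
      have e3 : ‖u x + t • ψ x - f x‖ ^ 2 = ‖u x - f x‖ ^ 2 + 2 * t * inner ℝ (u x - f x) (ψ x)
          + t ^ 2 * ‖ψ x‖ ^ 2 := by
        rw [show u x + t • ψ x - f x = (u x - f x) + t • ψ x by abel, norm_add_sq_real,
          real_inner_smul_right, norm_smul, mul_pow, Real.norm_eq_abs, sq_abs]
        ring
      have e4 : ε ^ 2 / 2 * ‖u' x + t • ψ' x‖ ^ 2 = ε ^ 2 / 2 * ‖u' x‖ ^ 2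
          + t * (ε ^ 2 * inner ℝ (u' x) (ψ' x)) + t ^ 2 * (ε ^ 2 / 2 * ‖ψ' x‖ ^ 2) := by
        rw [e2]; ring
      have e5 : 1 / (2 * lam) * ‖u x + t • ψ x - f x‖ ^ 2 = 1 / (2 * lam) * ‖u x - f x‖ ^ 2
          + t * (1 / lam * inner ℝ (u x - f x) (ψ x)) + t ^ 2 * (1 / (2 * lam) * ‖ψ x‖ ^ 2) := by
        rw [e3]; field_simp
      simp only [Pi.add_apply, auxF, real_inner_smul_left] at e1 ⊢
      rw [e4, e5]
      linarith)
  rw [integral_add' (i1.add (hl.const_mul t)) (ic.const_mul (t ^ 2)),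
    integral_add' i1 (hl.const_mul t), integral_const_mul, integral_const_mul] at h2
  linarith
theorem aux_Fbound {V : Type*} [NormedAddCommGroup V] [InnerProductSpace ℝ V] {ε : ℝ} (hε : 0 < ε)
    (v : V) : ‖auxF ε v‖ ≤ 1 + ε ^ 2 * ‖v‖ := by
  have h := aux_sqrt_pos hε v
  have h1 : 0 ≤ 1 / Real.sqrt (‖v‖ ^ 2 + ε ^ 2) + ε ^ 2 := by positivity
  have h2 := aux_le_sqrt (ε := ε) v
  unfold auxF
  rw [norm_smul, Real.norm_of_nonneg h1, add_mul]
  have : 1 / Real.sqrt (‖v‖ ^ 2 + ε ^ 2) * ‖v‖ ≤ 1 := by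
    rw [one_div_mul_eq_div, div_le_one h]; exact h2
  linarith

theorem aux_FmemLp {n : ℕ} {a b ε : ℝ} (hε : 0 < ε) {u' : ℝ → EuclideanSpace ℝ (Fin n)}
    (h : MemLp u' 2 (volume.restrict (Ioo a b))) :
    MemLp (fun x => auxF ε (u' x)) 2 (volume.restrict (Ioo a b)) := by
  have h1 : MemLp (fun x => (1:ℝ) + ε ^ 2 * ‖u' x‖) 2 (volume.restrict (Ioo a b)) := by
    have h2 : MemLp (fun x => ε ^ 2 * ‖u' x‖) 2 (volume.restrict (Ioo a b)) := h.norm.const_mul _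
    have h3 : MemLp (fun _ : ℝ => (1:ℝ)) 2 (volume.restrict (Ioo a b)) := memLp_const 1
    exact h3.add h2
  refine h1.mono ((auxF_cont hε).comp_aestronglyMeasurable h.1) (Eventually.of_forall fun x => ?_)
  exact (aux_Fbound hε _).trans (le_abs_self _)

theorem aux_contMemLp {n : ℕ} {a b : ℝ} {w : ℝ → EuclideanSpace ℝ (Fin n)}
    (h : ContinuousOn w (Icc a b)) : MemLp w 2 (volume.restrict (Ioo a b)) := by
  have hm : AEStronglyMeasurable w (volume.restrict (Ioo a b)) :=
    (h.mono Ioo_subset_Icc_self).aestronglyMeasurable measurableSet_Ioo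
  refine (memLp_two_iff_integrable_sq_norm hm).2 (aux_contInt ?_)
  fun_prop

theorem aux_intInner {n : ℕ} {a b : ℝ} {v w : ℝ → EuclideanSpace ℝ (Fin n)}
    (hv : MemLp v 2 (volume.restrict (Ioo a b))) (hw : MemLp w 2 (volume.restrict (Ioo a b))) :
    IntegrableOn (fun x => inner ℝ (v x) (w x)) (Ioo a b) := by
  have i1 : IntegrableOn (fun x => ‖v x‖ ^ 2) (Ioo a b) := hv.integrable_norm_pow (by norm_num)
  have i2 : IntegrableOn (fun x => ‖w x‖ ^ 2) (Ioo a b) := hw.integrable_norm_pow (by norm_num)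
  refine Integrable.mono' (i1.add i2) (hv.1.inner hw.1) (Eventually.of_forall fun x => ?_)
  have := norm_inner_le_norm (𝕜 := ℝ) (v x) (w x)
  simp only [Pi.add_apply]
  nlinarith [sq_nonneg (‖v x‖ - ‖w x‖), sq_nonneg ‖v x‖, sq_nonneg ‖w x‖]

/-- The first integral of the Euler-Lagrange equation. -/
theorem aux_first {n : ℕ} {a b lam ε : ℝ} (hab : a < b) (hlam : 0 < lam) (hε : 0 < ε)
    {f u u' : ℝ → EuclideanSpace ℝ (Fin n)} (hf : ContinuousOn f (Icc a b))
    (hu : IsMinimizerEps lam ε a b f u u') (w : ℝ → EuclideanSpace ℝ (Fin n))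
    (hwc : ContinuousOn w (Icc a b)) (hw : ∀ x ∈ Icc a b, w x = (1 / lam) • (u x - f x)) :
    (∫ t in a..b, w t) = 0 ∧
    ∀ᵐ x ∂(volume.restrict (Ioo a b)), auxF ε (u' x) = ∫ t in a..x, w t := by
  have hum := aux_meas hab hlam hε hf hu
  have huL := aux_memLp hu.1 hum
  have hwL := aux_contMemLp hwc
  have hwi := (aux_ii hab.le).2 (aux_memLp_int hwL)
  set W : ℝ → EuclideanSpace ℝ (Fin n) := fun x => 0 + ∫ t in a..x, w t with hW
  have hWH := aux_primH1 hab 0 hwL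
  have hWL := aux_contMemLp hWH.1
  have hFL := aux_FmemLp hε huL
  have hdL : MemLp (fun x => auxF ε (u' x) - W x) 2 (volume.restrict (Ioo a b)) := hFL.sub hWL
  set ψ' : ℝ → EuclideanSpace ℝ (Fin n) := fun x => auxF ε (u' x) - W x with hψ'
  set c : EuclideanSpace ℝ (Fin n) := W b - ∫ t in a..b, ψ' t with hc
  have hψH := aux_primH1 hab c hdL
  have hdi := (aux_ii hab.le).2 (aux_memLp_int hdL)
  set ψ : ℝ → EuclideanSpace ℝ (Fin n) := fun x => c + ∫ t in a..x, ψ' t with hψ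
  have p1 := aux_prim 0 w hwi
  have p2 := aux_prim c ψ' hdi
  have ibp := aux_ibp W ψ w ψ' p1.1 p2.1 p1.2 p2.2
  have hψb : ψ b = W b := by simp [hψ, hc]
  have hWa : W a = 0 := by simp [hW]
  rw [hψb, hWa, inner_zero_left, sub_zero, aux_int hab.le] at ibp
  have ibi : IntegrableOn (fun x => inner ℝ (w x) (ψ x) + inner ℝ (W x) (ψ' x)) (Ioo a b) := by
    rw [← intervalIntegrable_iff_integrableOn_Ioo_of_le hab.le]; exact ibp.1
  have sqi : IntegrableOn (fun x => ‖ψ' x‖ ^ 2) (Ioo a b) := hψH.2.1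
  have pt : ∀ x ∈ Ioo a b, (inner ℝ (w x) (ψ x) + inner ℝ (W x) (ψ' x)) + ‖ψ' x‖ ^ 2
      = inner ℝ ((1 / lam) • (u x - f x)) (ψ x) + inner ℝ (auxF ε (u' x)) (ψ' x) := by
    intro x hx
    rw [← hw x (Ioo_subset_Icc_self hx), ← real_inner_self_eq_norm_sq]
    have : auxF ε (u' x) = W x + ψ' x := by simp [hψ']
    have e := inner_add_left (𝕜 := ℝ) (W x) (ψ' x) (ψ' x)
    rw [this, e]; ring
  have hl : IntegrableOn (fun x => inner ℝ ((1 / lam) • (u x - f x)) (ψ x)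
      + inner ℝ (auxF ε (u' x)) (ψ' x)) (Ioo a b) :=
    (ibi.add sqi).congr_fun pt measurableSet_Ioo
  have el := aux_EL hab hlam hε hf hu hψH hdL.1 hl
  rw [← setIntegral_congr_fun measurableSet_Ioo pt, integral_add ibi sqi, ibp.2,
    real_inner_self_eq_norm_sq] at el
  have n1 : 0 ≤ ∫ x in Ioo a b, ‖ψ' x‖ ^ 2 := integral_nonneg fun x => by positivity
  have n2 : 0 ≤ ‖W b‖ ^ 2 := by positivity
  constructor
  · have : ‖W b‖ ^ 2 = 0 := by linarith
    have : W b = 0 := by simpa using this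
    simpa [hW] using this
  · have : ∫ x in Ioo a b, ‖ψ' x‖ ^ 2 = 0 := by linarith
    rw [integral_eq_zero_iff_of_nonneg (fun x => by positivity) sqi] at this
    filter_upwards [this] with x hx
    have hx' : ‖ψ' x‖ ^ 2 = 0 := hx
    have : ψ' x = 0 := by simpa using hx'
    have := sub_eq_zero.1 this
    simpa [hW] using this

/-- A Lipschitz representative of `u'`. -/
theorem aux_rep {n : ℕ} {a b ε : ℝ} (hab : a < b) (hε : 0 < ε)
    {u' w : ℝ → EuclideanSpace ℝ (Fin n)} (hwc : ContinuousOn w (Icc a b))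
    (h : ∀ᵐ x ∂(volume.restrict (Ioo a b)), auxF ε (u' x) = ∫ t in a..x, w t) :
    ∃ (K : NNReal) (U : ℝ → EuclideanSpace ℝ (Fin n)), LipschitzWith K U ∧
      (∀ᵐ x ∂(volume.restrict (Ioo a b)), u' x = U x) ∧
      ∀ x ∈ Icc a b, auxF ε (U x) = ∫ t in a..x, w t := by
  have hwL := aux_contMemLp hwc
  have hwi := (aux_ii hab.le).2 (aux_memLp_int hwL)
  obtain ⟨C, hC⟩ := isCompact_Icc.exists_bound_of_continuousOn hwc
  have hC0 : 0 ≤ C := (norm_nonneg _).trans (hC a ⟨le_rfl, hab.le⟩)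
  set W : ℝ → EuclideanSpace ℝ (Fin n) := fun x => ∫ t in a..x, w t with hW
  have hWc : ContinuousOn W (Icc a b) := by
    have := intervalIntegral.continuousOn_primitive_interval' (b₁ := a) (b₂ := b) hwi (a := a)
      (by simp)
    rwa [uIcc_of_le hab.le] at this
  have hWL : ∀ x ∈ Icc a b, ∀ y ∈ Icc a b, ‖W x - W y‖ ≤ C * |x - y| := by
    intro x hx y hy
    have hx' : IntervalIntegrable w volume a x :=
      hwi.mono_set (uIcc_subset_uIcc (by simp) (by rwa [uIcc_of_le hab.le]))
    have hy' : IntervalIntegrable w volume a y :=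
      hwi.mono_set (uIcc_subset_uIcc (by simp) (by rwa [uIcc_of_le hab.le]))
    simp only [hW]
    rw [intervalIntegral.integral_interval_sub_left hx' hy']
    apply intervalIntegral.norm_integral_le_of_norm_le_const
    intro t ht
    apply hC
    have : uIcc y x ⊆ Icc a b := by
      rw [← uIcc_of_le hab.le]
      apply uIcc_subset_uIcc <;> rwa [uIcc_of_le hab.le]
    exact this (uIoc_subset_uIcc ht)
  set S : Set ℝ := {x | x ∈ Ioo a b ∧ auxF ε (u' x) = W x} with hS
  have hL : LipschitzOnWith (Real.toNNReal (C / ε ^ 2)) u' S := by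
    apply LipschitzOnWith.of_dist_le_mul
    intro x hx y hy
    rw [Real.coe_toNNReal _ (by positivity), dist_eq_norm, Real.dist_eq]
    have h1 := aux_strong hε (u' x) (u' y)
    rw [hx.2, hy.2] at h1
    have h2 := hWL x (Ioo_subset_Icc_self hx.1) y (Ioo_subset_Icc_self hy.1)
    have hε2 : 0 < ε ^ 2 := by positivity
    rw [div_mul_eq_mul_div, le_div_iff₀ hε2]
    linarith
  obtain ⟨U, hU, hEq⟩ := hL.extend_finite_dimension
  have hae : ∀ᵐ x ∂(volume.restrict (Ioo a b)), u' x = U x ∧ auxF ε (U x) = W x := by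
    filter_upwards [h, ae_restrict_mem measurableSet_Ioo] with x hx hxm
    have e : u' x = U x := hEq ⟨hxm, hx⟩
    exact ⟨e, by rw [← e]; exact hx⟩
  refine ⟨_, U, hU, hae.mono fun x hx => hx.1, ?_⟩
  have := Measure.eqOn_Icc_of_ae_eq volume hab.ne (f := fun x => auxF ε (U x)) (g := W)
    (by
      rw [restrict_Ioo_eq_restrict_Icc.symm]
      exact hae.mono fun x hx => hx.2)
    ((auxF_cont hε).comp hU.continuous).continuousOn hWc
  exact this

theorem aux_first_ineq {n : ℕ} {a b lam ε : ℝ} (hab : a < b) (hlam : 0 < lam) (hε : 0 < ε)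
    {f f' u u' : ℝ → EuclideanSpace ℝ (Fin n)} (hf : InH1 a b f f')
    (hfm : AEStronglyMeasurable f' (volume.restrict (Ioo a b)))
    (hu : IsMinimizerEps lam ε a b f u u') {p : ℝ} (hp : 1 ≤ p) :
    IntegrableOn (fun x => inner ℝ (auxP ε p (u' x)) (u' x)) (Ioo a b) ∧
    IntegrableOn (fun x => inner ℝ (auxP ε p (u' x)) (f' x)) (Ioo a b) ∧
    ∫ x in Ioo a b, inner ℝ (auxP ε p (u' x)) (u' x)
      ≤ ∫ x in Ioo a b, inner ℝ (auxP ε p (u' x)) (f' x) := by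
  have hum := aux_meas hab hlam hε hf.1 hu
  have huL := aux_memLp hu.1 hum
  have hfL := aux_memLp hf hfm
  have hui := (aux_ii hab.le).2 (aux_memLp_int huL)
  have hfi := (aux_ii hab.le).2 (aux_memLp_int hfL)
  set D : ℝ → EuclideanSpace ℝ (Fin n) := fun x => (1 / lam) • (u' x - f' x) with hD
  have hDL : MemLp D 2 (volume.restrict (Ioo a b)) := (huL.sub hfL).const_smul (1 / lam)
  have hDi := (aux_ii hab.le).2 (aux_memLp_int hDL)
  set c : EuclideanSpace ℝ (Fin n) := (1 / lam) • (u a - f a) with hc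
  have hwH := aux_primH1 hab c hDL
  set w : ℝ → EuclideanSpace ℝ (Fin n) := fun x => c + ∫ t in a..x, D t with hw
  have ha : a ∈ Icc a b := ⟨le_rfl, hab.le⟩
  have hb : b ∈ Icc a b := ⟨hab.le, le_rfl⟩
  have hweq : ∀ x ∈ Icc a b, w x = (1 / lam) • (u x - f x) := by
    intro x hx
    have hs : uIcc a x ⊆ uIcc a b := uIcc_subset_uIcc (by simp) (by rwa [uIcc_of_le hab.le])
    simp only [hw, hD]
    rw [intervalIntegral.integral_smul, intervalIntegral.integral_sub (hui.mono_set hs)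
      (hfi.mono_set hs), ← hu.1.2.2 a ha x hx, ← hf.2.2 a ha x hx, hc]
    module
  have hwc := hwH.1
  obtain ⟨hW0, hWae⟩ := aux_first hab hlam hε hf.1 hu w hwc hweq
  obtain ⟨K, U, hUL, hUae, hUF⟩ := aux_rep hab hε hwc hWae
  -- Lipschitz composition
  set V : ℝ → EuclideanSpace ℝ (Fin n) := fun x => auxP ε p (U x) with hV
  obtain ⟨R, hR⟩ := isCompact_Icc.exists_bound_of_continuousOn
    (hUL.continuous.continuousOn (s := Icc a b))
  obtain ⟨K', hK'⟩ := ((auxP_contDiff (V := EuclideanSpace ℝ (Fin n)) hε p).contDiffOn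
    (s := Metric.closedBall 0 R)).exists_lipschitzOnWith (by norm_num)
    (convex_closedBall 0 R) (isCompact_closedBall 0 R)
  have hVL : LipschitzOnWith (K' * K) V (Icc a b) :=
    hK'.comp hUL.lipschitzOnWith (fun x hx => by simpa using hR x hx)
  have hVL' : LipschitzOnWith (K' * K) V (uIcc a b) := by rwa [uIcc_of_le hab.le]
  have hVac : ∀ i, AbsolutelyContinuousOnInterval (fun x => V x i) a b := by
    intro i
    have h1 := (EuclideanSpace.proj i : EuclideanSpace ℝ (Fin n) →L[ℝ] ℝ).lipschitz
    exact (h1.comp_lipschitzOnWith hVL').absolutelyContinuousOnInterval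
  have hVd : ∀ᵐ x, x ∈ uIcc a b → HasDerivAt V (deriv V x) x := by
    have hn1 : ∀ᵐ x : ℝ, x ≠ a := by simp [ae_iff, measure_singleton]
    have hn2 : ∀ᵐ x : ℝ, x ≠ b := by simp [ae_iff, measure_singleton]
    filter_upwards [hVL.ae_differentiableWithinAt_of_mem, hn1, hn2] with x h1 h2 h3 hx
    rw [uIcc_of_le hab.le] at hx
    exact ((h1 hx).differentiableAt (Icc_mem_nhds (lt_of_le_of_ne hx.1 h2.symm)
      (lt_of_le_of_ne hx.2 h3))).hasDerivAt
  have p1 := aux_prim c D hDi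
  have ibp := aux_ibp V w (deriv V) D hVac p1.1 hVd p1.2
  have hVa : V a = 0 := by
    have : U a = 0 := auxF_zero hε _ (by rw [hUF a ha]; simp)
    simp [hV, this, auxP]
  have hVb : V b = 0 := by
    have : U b = 0 := auxF_zero hε _ (by rw [hUF b hb]; exact hW0)
    simp [hV, this, auxP]
  rw [hVa, hVb, inner_zero_left, inner_zero_left, sub_zero, aux_int hab.le] at ibp
  have ibi : IntegrableOn (fun x => inner ℝ (deriv V x) (w x) + inner ℝ (V x) (D x)) (Ioo a b) := by
    rw [← intervalIntegrable_iff_integrableOn_Ioo_of_le hab.le]; exact ibp.1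
  -- nonnegativity
  have hwi := (aux_ii hab.le).2 (aux_memLp_int (aux_contMemLp hwc))
  have p2 := aux_prim 0 w hwi
  have hnn : ∀ᵐ x ∂(volume.restrict (Ioo a b)), 0 ≤ inner ℝ (deriv V x) (w x) := by
    rw [ae_restrict_iff' measurableSet_Ioo]
    filter_upwards [hVd, p2.2] with x h1 h2 hx
    have hxi : x ∈ uIcc a b := by rw [uIcc_of_le hab.le]; exact Ioo_subset_Icc_self hx
    have t1 := hasDerivAt_iff_tendsto_slope.1 (h1 hxi)
    have t2 := hasDerivAt_iff_tendsto_slope.1 (h2 hxi)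
    have t3 := t1.inner (𝕜 := ℝ) t2
    refine ge_of_tendsto t3 ?_
    have hnb : Ioo a b ∈ nhdsWithin x {x}ᶜ := mem_nhdsWithin_of_mem_nhds (Ioo_mem_nhds hx.1 hx.2)
    filter_upwards [hnb] with y hy
    simp only [slope, vsub_eq_sub, real_inner_smul_left, real_inner_smul_right, zero_add]
    rw [← hUF y (Ioo_subset_Icc_self hy), ← hUF x (Ioo_subset_Icc_self hx), ← mul_assoc]
    exact mul_nonneg (mul_self_nonneg _) (aux_mono hε hp _ _)
  -- integrability
  have hVc : ContinuousOn V (Icc a b) := hVL.continuousOn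
  have hVmL := aux_contMemLp hVc
  have iVD : IntegrableOn (fun x => inner ℝ (V x) (D x)) (Ioo a b) := aux_intInner hVmL hDL
  have iVu : IntegrableOn (fun x => inner ℝ (V x) (u' x)) (Ioo a b) := aux_intInner hVmL huL
  have iVf : IntegrableOn (fun x => inner ℝ (V x) (f' x)) (Ioo a b) := aux_intInner hVmL hfL
  have key : ∫ x in Ioo a b, inner ℝ (V x) (D x) ≤ 0 := by
    rw [← ibp.2]
    apply integral_mono_ae iVD ibi
    filter_upwards [hnn] with x hx
    linarith
  have key2 : ∫ x in Ioo a b, inner ℝ (V x) (D x) = (1 / lam) *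
      ((∫ x in Ioo a b, inner ℝ (V x) (u' x)) - ∫ x in Ioo a b, inner ℝ (V x) (f' x)) := by
    rw [← integral_sub iVu iVf, ← integral_const_mul]
    congr 1; ext x
    simp only [hD, real_inner_smul_right, inner_sub_right]
  rw [key2] at key
  have key3 : (∫ x in Ioo a b, inner ℝ (V x) (u' x)) ≤ ∫ x in Ioo a b, inner ℝ (V x) (f' x) := by
    by_contra hcon
    push Not at hcon
    have : 0 < 1 / lam * ((∫ x in Ioo a b, inner ℝ (V x) (u' x))
      - ∫ x in Ioo a b, inner ℝ (V x) (f' x)) := mul_pos (by positivity) (by linarith)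
    linarith
  have c1 : (fun x => inner ℝ (V x) (u' x)) =ᵐ[volume.restrict (Ioo a b)]
      (fun x => inner ℝ (auxP ε p (u' x)) (u' x)) := by
    filter_upwards [hUae] with x hx
    simp only [hV, hx]
  have c2 : (fun x => inner ℝ (V x) (f' x)) =ᵐ[volume.restrict (Ioo a b)]
      (fun x => inner ℝ (auxP ε p (u' x)) (f' x)) := by
    filter_upwards [hUae] with x hx
    simp only [hV, hx]
  refine ⟨iVu.congr c1, iVf.congr c2, ?_⟩
  rwa [← integral_congr_ae c1, ← integral_congr_ae c2]

open scoped RealInnerProductSpace in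
/-- the key integral identity-type estimates for the minimizer of `E_ε`:
`∫_I |u'|_ε^{p−2} ‖u'‖² ≤ ∫_I |u'|_ε^{p−2} (u' ⬝ f')` and consequently
`∫_I |u'|_ε^{p−2} ‖u'‖² ≤ ((p−1)/p) ∫_I |u'|_ε^p + (1/p) ∫_I ‖f'‖^p`. -/
theorem minimizerEps_weighted_gradient_estimates
    {n : ℕ} (hn : 1 ≤ n) (a b : ℝ) (hab : a < b) (lam : ℝ) (hlam : 0 < lam)
    (ε : ℝ) (hε : 0 < ε)
    (f f' : ℝ → EuclideanSpace ℝ (Fin n)) (hf : InH1 a b f f')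
    (u u' : ℝ → EuclideanSpace ℝ (Fin n)) (hu : IsMinimizerEps lam ε a b f u u')
    (p : ℝ) (hp1 : 1 ≤ p) (hp2 : p ≤ 2) :
    ((∫ x in Set.Ioo a b, Real.sqrt (‖u' x‖ ^ 2 + ε ^ 2) ^ (p - 2) * ‖u' x‖ ^ 2)
      ≤ ∫ x in Set.Ioo a b, Real.sqrt (‖u' x‖ ^ 2 + ε ^ 2) ^ (p - 2) * ⟪u' x, f' x⟫)
    ∧
    ((∫ x in Set.Ioo a b, Real.sqrt (‖u' x‖ ^ 2 + ε ^ 2) ^ (p - 2) * ‖u' x‖ ^ 2)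
      ≤ ((p - 1) / p) * (∫ x in Set.Ioo a b, Real.sqrt (‖u' x‖ ^ 2 + ε ^ 2) ^ p)
        + (1 / p) * ∫ x in Set.Ioo a b, ‖f' x‖ ^ p) := by
  rcases aux_meas_or_const hab hf with hfm | hfc
  · obtain ⟨i1, i2, h⟩ := aux_first_ineq hab hlam hε hf hfm hu hp1
    have hfL := aux_memLp hf hfm
    simp only [auxP, real_inner_smul_left, real_inner_self_eq_norm_sq] at i1 i2 h
    refine ⟨h, h.trans ?_⟩
    have hum := aux_meas hab hlam hε hf.1 hu
    have sm : AEStronglyMeasurable (fun x => Real.sqrt (‖u' x‖ ^ 2 + ε ^ 2))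
        (volume.restrict (Ioo a b)) := (aux_sqrtInt ε hu.1.2.1).aestronglyMeasurable
    have hp0 : 0 ≤ p := by linarith
    have j1 : IntegrableOn (fun x => Real.sqrt (‖u' x‖ ^ 2 + ε ^ 2) ^ p) (Ioo a b) := by
      have hc : IntegrableOn (fun _ : ℝ => 1 + ε ^ 2) (Ioo a b) := integrable_const _
      refine Integrable.mono' (hu.1.2.1.add hc)
        ((Real.continuous_rpow_const hp0).comp_aestronglyMeasurable sm)
        (Eventually.of_forall fun x => ?_)
      rw [Real.norm_of_nonneg (by positivity)]
      have := aux_pow_le hp1 hp2 (Real.sqrt_nonneg (‖u' x‖ ^ 2 + ε ^ 2))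
      rw [Real.sq_sqrt (by positivity)] at this
      simp only [Pi.add_apply]
      linarith
    have j2 : IntegrableOn (fun x => ‖f' x‖ ^ p) (Ioo a b) := by
      have hc : IntegrableOn (fun _ : ℝ => (1 : ℝ)) (Ioo a b) := integrable_const _
      refine Integrable.mono' (hc.add hf.2.1)
        ((Real.continuous_rpow_const hp0).comp_aestronglyMeasurable hfm.norm)
        (Eventually.of_forall fun x => ?_)
      rw [Real.norm_of_nonneg (by positivity)]
      exact aux_pow_le hp1 hp2 (norm_nonneg _)
    rw [← integral_const_mul, ← integral_const_mul,
      ← integral_add (j1.const_mul _) (j2.const_mul _)]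
    apply integral_mono i2 ((j1.const_mul _).add (j2.const_mul _))
    intro x
    have hg := aux_sqrt_pos hε (u' x)
    refine le_trans ?_ (aux_young hp1 hg (norm_nonneg (f' x)))
    have hgp : 0 < Real.sqrt (‖u' x‖ ^ 2 + ε ^ 2) ^ (p - 2) := Real.rpow_pos_of_pos hg _
    have e : Real.sqrt (‖u' x‖ ^ 2 + ε ^ 2) ^ (p - 1)
        = Real.sqrt (‖u' x‖ ^ 2 + ε ^ 2) ^ (p - 2) * Real.sqrt (‖u' x‖ ^ 2 + ε ^ 2) := by
      rw [← Real.rpow_add_one hg.ne']; congr 1; ring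
    rw [e, mul_assoc]
    apply mul_le_mul_of_nonneg_left _ hgp.le
    exact (real_inner_le_norm _ _).trans
      (mul_le_mul_of_nonneg_right (aux_le_sqrt _) (norm_nonneg _))
  · have h0 := aux_zero hlam hε hf.1 hu (aux_constH1 hfc) (fun x _ => by simp)
    have z1 : (∫ x in Set.Ioo a b, Real.sqrt (‖u' x‖ ^ 2 + ε ^ 2) ^ (p - 2) * ‖u' x‖ ^ 2) = 0 := by
      apply integral_eq_zero_of_ae
      filter_upwards [h0] with x hx
      simp [hx]
    have z2 : (∫ x in Set.Ioo a b, Real.sqrt (‖u' x‖ ^ 2 + ε ^ 2) ^ (p - 2) * ⟪u' x, f' x⟫) = 0 := by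
      apply integral_eq_zero_of_ae
      filter_upwards [h0] with x hx
      simp [hx]
    rw [z1, z2]
    refine ⟨le_rfl, ?_⟩
    have n1 : 0 ≤ ∫ x in Set.Ioo a b, Real.sqrt (‖u' x‖ ^ 2 + ε ^ 2) ^ p :=
      integral_nonneg fun x => by positivity
    have n2 : 0 ≤ ∫ x in Set.Ioo a b, ‖f' x‖ ^ p := integral_nonneg fun x => by positivity
    have n3 : 0 ≤ (p - 1) / p := div_nonneg (by linarith) (by linarith)
    have n4 : 0 ≤ 1 / p := div_nonneg (by linarith) (by linarith)
    positivity
end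
end

section
/- Suppose f ∈ H¹(I,ℝⁿ) with derivative f', and let u be a minimizer of the energy E. Then for every x₀ ∈ I and r > 0 with [x₀ − r, x₀ + r] ⊆ I, the total variation of u over the closed ball satisfies eVariationOn u (Set.Icc (x₀ − r) (x₀ + r)) ≤ ∫_{x₀−r}^{x₀+r} ‖f'‖, possibly after modifying u on a set of measure zero. -/
open MeasureTheory Set Filter
open scoped ENNReal

noncomputable section

/-- The Rudin–Osher–Fatemi energy with fidelity weight `1/(2 lam)`, datum `f`,
on the interval `I = Ioo a b`. -/
def rofEnergy {n : ℕ} (lam a b : ℝ) (f w : ℝ → EuclideanSpace ℝ (Fin n)) : ℝ≥0∞ :=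
  eVariationOn w (Set.Ioo a b) +
    ENNReal.ofReal ((1 / (2 * lam)) * ∫ x in Set.Ioo a b, ‖w x - f x‖ ^ 2)

/-- `u` is a minimizer of the ROF energy among Borel measurable functions
square-integrable on `Ioo a b`. -/
def IsMinimizer {n : ℕ} (lam a b : ℝ) (f u : ℝ → EuclideanSpace ℝ (Fin n)) : Prop :=
  Measurable u ∧ SqIntOn u (Set.Ioo a b) ∧
    ∀ w : ℝ → EuclideanSpace ℝ (Fin n), Measurable w → SqIntOn w (Set.Ioo a b) →
      rofEnergy lam a b f u ≤ rofEnergy lam a b f w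

def dF {E : Type*} [NormedAddCommGroup E] (M : ℕ) (c : ℝ) (g w : ℕ → E) : ℝ :=
  ∑ i ∈ Finset.range M, ‖w (i+1) - w i‖ + c * ∑ i ∈ Finset.range (M+1), ‖w i - g i‖^2

lemma dF_exists {n : ℕ} (M : ℕ) (c : ℝ) (hc : 0 < c) (g : ℕ → EuclideanSpace ℝ (Fin n)) :
    ∃ w, ∀ v, dF M c g w ≤ dF M c g v := by
  let ex : (Fin (M+1) → EuclideanSpace ℝ (Fin n)) → ℕ → EuclideanSpace ℝ (Fin n) :=
    fun v i => if h : i < M+1 then v ⟨i, h⟩ else 0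
  have hcont : Continuous (fun v => dF M c g (ex v)) := by
    have h1 : ∀ i, Continuous (fun v => ex v i) := by
      intro i
      by_cases h : i < M+1
      · simp only [ex, h, dite_true]; fun_prop
      · simp only [ex, h, dite_false]; fun_prop
    unfold dF
    refine Continuous.add ?_ (Continuous.mul continuous_const ?_)
    · exact continuous_finsetSum _ fun i _ => ((h1 _).sub (h1 _)).norm
    · exact continuous_finsetSum _ fun i _ => (((h1 _).sub continuous_const).norm).pow 2
  have hrestr : ∀ v : ℕ → EuclideanSpace ℝ (Fin n), dF M c g (ex (fun i => v i)) = dF M c g v := by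
    intro v
    unfold dF
    congr 1
    · refine Finset.sum_congr rfl fun i hi => ?_
      have := Finset.mem_range.1 hi
      have h1 : i < M + 1 := by omega
      have h2 : i + 1 < M + 1 := by omega
      simp only [ex, h1, h2, dite_true]
    · congr 1
      refine Finset.sum_congr rfl fun i hi => ?_
      have := Finset.mem_range.1 hi
      simp only [ex, this, dite_true]
  have hlow : ∀ (v : Fin (M+1) → EuclideanSpace ℝ (Fin n)) (i : Fin (M+1)),
      c * ‖v i - g i‖^2 ≤ dF M c g (ex v) := by
    intro v i
    unfold dF
    have h0 : 0 ≤ ∑ i ∈ Finset.range M, ‖ex v (i+1) - ex v i‖ :=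
      Finset.sum_nonneg fun _ _ => norm_nonneg _
    have h1 := Finset.single_le_sum (f := fun i => ‖ex v i - g i‖^2) (s := Finset.range (M+1))
      (fun _ _ => by positivity) (Finset.mem_range.2 i.2)
    have h2 : ex v i = v i := by simp only [ex, i.2, dite_true]
    simp only [h2] at h1
    nlinarith
  let g' : Fin (M+1) → EuclideanSpace ℝ (Fin n) := fun i => g i
  have hF0 : 0 ≤ dF M c g (ex g') := le_trans (by positivity) (hlow g' 0)
  obtain ⟨v, hv, hmin⟩ := (isCompact_closedBall g' (Real.sqrt (dF M c g (ex g') / c))).exists_isMinOn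
    ⟨g', Metric.mem_closedBall_self (Real.sqrt_nonneg _)⟩ hcont.continuousOn
  refine ⟨ex v, fun w => ?_⟩
  rw [← hrestr w]
  set w' : Fin (M+1) → EuclideanSpace ℝ (Fin n) := fun i => w i
  by_cases hw : w' ∈ Metric.closedBall g' (Real.sqrt (dF M c g (ex g') / c))
  · exact hmin hw
  · have h1 : dF M c g (ex v) ≤ dF M c g (ex g') :=
      hmin (Metric.mem_closedBall_self (Real.sqrt_nonneg _))
    rw [Metric.mem_closedBall, dist_pi_le_iff (Real.sqrt_nonneg _)] at hw
    push Not at hw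
    obtain ⟨i, hi⟩ := hw
    rw [dist_eq_norm, Real.sqrt_lt' (lt_of_le_of_lt (Real.sqrt_nonneg _) (by simpa [dist_eq_norm] using hi))] at hi
    rw [div_lt_iff₀ hc] at hi
    have := hlow w' i
    have e : g' i = g i := rfl
    rw [e] at hi
    linarith

lemma small_t {A B : ℝ} (h : ∀ t : ℝ, 0 < t → t ≤ 1 → t * A ≤ t^2 * B) : A ≤ 0 := by
  by_contra hA
  push Not at hA
  have hB : 0 < |B| + 1 := by positivity
  have ht : 0 < min 1 (A / (2*(|B|+1))) := lt_min one_pos (by positivity)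
  have h1 := h _ ht (min_le_left _ _)
  set t := min 1 (A / (2*(|B|+1)))
  have h2 : A ≤ t * B := by
    have : t * A ≤ t * (t * B) := by nlinarith
    exact le_of_mul_le_mul_left this ht
  have h3 : t * B ≤ t * (|B|+1) := by
    have := le_abs_self B
    exact mul_le_mul_of_nonneg_left (by linarith) ht.le
  have h4 : t * (|B|+1) ≤ A / (2*(|B|+1)) * (|B|+1) :=
    mul_le_mul_of_nonneg_right (min_le_right _ _) hB.le
  have h5 : A / (2*(|B|+1)) * (|B|+1) = A/2 := by field_simp
  linarith

lemma dF_est {E : Type*} [NormedAddCommGroup E] [InnerProductSpace ℝ E] (M : ℕ) (c : ℝ) (hc : 0 < c)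
    (g w : ℕ → E) (hw : ∀ v, dF M c g w ≤ dF M c g v) (k : ℕ) (hk : k < M) :
    ‖w (k+1) - w k‖ ≤ ‖g (k+1) - g k‖ := by
  let Z : ℕ → E := fun k => (2*c) • ∑ j ∈ Finset.range (M+1), if k ≤ j then w j - g j else 0
  -- quadratic part
  have hq : ∀ (k : ℕ) (e : E), c * ∑ i ∈ Finset.range (M+1), ‖(w i + if k ≤ i then e else 0) - g i‖^2
      ≤ c * ∑ i ∈ Finset.range (M+1), ‖w i - g i‖^2 + inner ℝ (Z k) e + c * (M+1) * ‖e‖^2 := by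
    intro k e
    have h1 : ∀ i, ‖(w i + if k ≤ i then e else 0) - g i‖^2 ≤ ‖w i - g i‖^2 +
        2 * inner ℝ (if k ≤ i then w i - g i else 0) e + ‖e‖^2 := by
      intro i
      split_ifs with h
      · rw [show w i + e - g i = (w i - g i) + e by abel, norm_add_sq_real]
      · simp
    have h2 := Finset.sum_le_sum (s := Finset.range (M+1)) fun i _ => h1 i
    rw [Finset.sum_add_distrib, Finset.sum_add_distrib, ← Finset.mul_sum, ← sum_inner] at h2
    simp only [Finset.sum_const, Finset.card_range, nsmul_eq_mul] at h2
    push_cast at h2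
    have h3 : inner ℝ (Z k) e = 2 * c * inner ℝ (∑ j ∈ Finset.range (M+1), if k ≤ j then w j - g j else 0) e := by
      simp only [Z, real_inner_smul_left]
    rw [h3]
    nlinarith [mul_le_mul_of_nonneg_left h2 hc.le]
  have hZ1 : ∀ k, ‖Z k‖ ≤ 1 := by
    intro k
    have key : ∀ e : E, 0 ≤ ‖e‖ + inner ℝ (Z k) e + c * (M+1) * ‖e‖^2 := by
      intro e
      have h1 := hw (fun i => w i + if k ≤ i then e else 0)
      unfold dF at h1
      have h2 := hq k e
      have h3 : ∑ i ∈ Finset.range M, ‖(w (i+1) + if k ≤ i+1 then e else 0) - (w i + if k ≤ i then e else 0)‖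
          ≤ ∑ i ∈ Finset.range M, ‖w (i+1) - w i‖ + ‖e‖ := by
        have h4 : ∀ i, ‖(w (i+1) + if k ≤ i+1 then e else 0) - (w i + if k ≤ i then e else 0)‖
          ≤ ‖w (i+1) - w i‖ + if i + 1 = k then ‖e‖ else 0 := by
          intro i
          by_cases ha : k ≤ i
          · have : k ≤ i + 1 := by omega
            have h' : ¬ (i + 1 = k) := by omega
            simp [ha, this, h']
          · by_cases hb : i + 1 = k
            · have : k ≤ i + 1 := by omega
              simp only [ha, this, hb, if_true, if_false, le_refl]
              rw [show w k + e - (w i + 0) = (w k - w i) + e by abel]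
              exact norm_add_le _ _
            · have : ¬ (k ≤ i + 1) := by omega
              simp [ha, this, hb]
        refine (Finset.sum_le_sum fun i _ => h4 i).trans ?_
        rw [Finset.sum_add_distrib]
        gcongr
        have h5 : ∀ i, (if i + 1 = k then ‖e‖ else 0) ≤ if i = k - 1 then ‖e‖ else 0 := by
          intro i
          split_ifs with h h' h'
          · exact le_rfl
          · omega
          · exact norm_nonneg _
          · exact le_rfl
        refine (Finset.sum_le_sum fun i _ => h5 i).trans ?_
        rw [Finset.sum_ite_eq']
        split_ifs
        · exact le_rfl
        · exact norm_nonneg _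
      linarith
    by_contra hcon
    push Not at hcon
    have := small_t (A := ‖Z k‖^2 - ‖Z k‖) (B := c * (M+1) * ‖Z k‖^2) (by
      intro t ht _
      have := key (-(t • Z k))
      rw [norm_neg, norm_smul, inner_neg_right, real_inner_smul_right, real_inner_self_eq_norm_sq,
        Real.norm_of_nonneg ht.le] at this
      nlinarith)
    nlinarith
  set d := w (k+1) - w k with hd
  have hZd : ‖d‖ ≤ - inner ℝ (Z (k+1)) d := by
    have := small_t (A := ‖d‖ + inner ℝ (Z (k+1)) d) (B := c * (M+1) * ‖d‖^2) (by
      intro t ht ht1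
      have h1 := hw (fun i => w i + if k+1 ≤ i then -(t • d) else 0)
      unfold dF at h1
      have h2 := hq (k+1) (-(t•d))
      have h3 : ∑ i ∈ Finset.range M, ‖(w (i+1) + if k+1 ≤ i+1 then -(t•d) else 0) - (w i + if k+1 ≤ i then -(t•d) else 0)‖
          ≤ ∑ i ∈ Finset.range M, ‖w (i+1) - w i‖ - t * ‖d‖ := by
        have h4 : ∀ i, ‖(w (i+1) + if k+1 ≤ i+1 then -(t•d) else 0) - (w i + if k+1 ≤ i then -(t•d) else 0)‖
          = ‖w (i+1) - w i‖ - if i = k then t * ‖d‖ else 0 := by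
          intro i
          by_cases ha : k + 1 ≤ i
          · have : k + 1 ≤ i + 1 := by omega
            have h' : ¬ (i = k) := by omega
            simp [ha, this, h']
          · by_cases hb : i = k
            · subst hb
              simp only [ha, le_refl, if_true, if_false]
              rw [show w (i+1) + -(t • d) - (w i + 0) = (1-t) • d by rw [sub_smul, one_smul, hd]; abel,
                norm_smul, Real.norm_of_nonneg (by linarith), ← hd]
              ring
            · have : ¬ (k+1 ≤ i + 1) := by omega
              simp [ha, this, hb]
        rw [Finset.sum_congr rfl fun i _ => h4 i, Finset.sum_sub_distrib, Finset.sum_ite_eq',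
          if_pos (Finset.mem_range.2 hk)]
      rw [norm_neg, norm_smul, inner_neg_right, real_inner_smul_right,
        Real.norm_of_nonneg ht.le] at h2
      nlinarith)
    linarith
  have hstep : ∀ k, k ≤ M → Z k - Z (k+1) = (2*c) • (w k - g k) := by
    intro k hk
    simp only [Z]
    rw [← smul_sub, ← Finset.sum_sub_distrib]
    congr 1
    rw [Finset.sum_eq_single k]
    · simp
    · intro j _ hj
      by_cases h : k ≤ j
      · have : k + 1 ≤ j := by omega
        simp [h, this]
      · have : ¬ (k + 1 ≤ j) := by omega
        simp [h, this]
    · intro h; exact absurd (Finset.mem_range.2 (by omega)) h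
  by_cases hd0 : ‖d‖ = 0
  · rw [hd0]; exact norm_nonneg _
  have hdpos : 0 < ‖d‖ := lt_of_le_of_ne (norm_nonneg _) (Ne.symm hd0)
  have hcs : - inner ℝ (Z (k+1)) d ≤ ‖Z (k+1)‖ * ‖d‖ := by
    have := abs_real_inner_le_norm (Z (k+1)) d
    linarith [neg_abs_le (inner ℝ (Z (k+1)) d : ℝ)]
  have hZge : 1 ≤ ‖Z (k+1)‖ := by
    by_contra h
    push Not at h
    nlinarith
  have hZeq : ‖Z (k+1)‖ = 1 := le_antisymm (hZ1 _) hZge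
  have hrel : (2*c) • (d - (g (k+1) - g k)) = Z (k+1) - Z (k+2) - (Z k - Z (k+1)) := by
    rw [hstep k hk.le, hstep (k+1) hk, ← smul_sub, hd]; congr 1; abel
  have hin : 2*c*(inner ℝ (Z (k+1)) d - inner ℝ (Z (k+1)) (g (k+1) - g k)) ≥ 0 := by
    have h1 : inner ℝ (Z (k+1)) ((2*c) • (d - (g (k+1) - g k))) = 2*c*(inner ℝ (Z (k+1)) d - inner ℝ (Z (k+1)) (g (k+1) - g k)) := by
      rw [real_inner_smul_right, inner_sub_right]
    rw [← h1, hrel]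
    simp only [inner_sub_right, real_inner_self_eq_norm_sq, hZeq]
    have a1 := real_inner_le_norm (Z (k+1)) (Z k)
    have a2 := real_inner_le_norm (Z (k+1)) (Z (k+2))
    rw [hZeq] at a1 a2
    linarith [hZ1 k, hZ1 (k+2)]
  have hin2 : 0 ≤ inner ℝ (Z (k+1)) d - inner ℝ (Z (k+1)) (g (k+1) - g k) := by
    by_contra h
    push Not at h
    nlinarith
  have a3 := abs_real_inner_le_norm (Z (k+1)) (g (k+1) - g k)
  rw [hZeq, one_mul] at a3
  linarith [neg_abs_le (inner ℝ (Z (k+1)) (g (k+1) - g k) : ℝ)]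

def rIdx (a b : ℝ) (M : ℕ) (x : ℝ) : ℕ := ⌊(x - a) / ((b - a) / (M + 1))⌋₊

def rPt (a b : ℝ) (M : ℕ) (i : ℕ) : ℝ := a + (i + 1/2) * ((b - a) / (M + 1))

lemma rH_pos {a b : ℝ} (hab : a < b) (M : ℕ) : 0 < (b - a) / ((M:ℝ) + 1) :=
  div_pos (by linarith) (by positivity)

lemma rIdx_le {a b : ℝ} (hab : a < b) (M : ℕ) {x : ℝ} (hx : x ∈ Ioo a b) : rIdx a b M x ≤ M := by
  have hp := rH_pos hab M
  unfold rIdx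
  rw [← Nat.lt_succ_iff, Nat.floor_lt (div_nonneg (by linarith [hx.1]) hp.le)]
  rw [div_lt_iff₀ hp]
  push_cast
  rw [mul_div_cancel₀ _ (by positivity)]
  linarith [hx.2]

lemma rIdx_mono {a b : ℝ} (hab : a < b) (M : ℕ) : Monotone (rIdx a b M) := by
  intro x y hxy
  have hp := rH_pos hab M
  unfold rIdx
  gcongr

lemma rIdx_meas (a b : ℝ) (M : ℕ) : Measurable (rIdx a b M) := by
  unfold rIdx
  exact Nat.measurable_floor.comp (by fun_prop)

lemma rPt_mono {a b : ℝ} (hab : a < b) (M : ℕ) : Monotone (rPt a b M) := by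
  intro i j hij
  have hp := rH_pos hab M
  unfold rPt
  gcongr

lemma rPt_mem {a b : ℝ} (hab : a < b) (M : ℕ) {i : ℕ} (hi : i ≤ M) : rPt a b M i ∈ Ioo a b := by
  have hp := rH_pos hab M
  have h1 : ((M:ℝ) + 1) * ((b - a) / (M + 1)) = b - a := mul_div_cancel₀ _ (by positivity)
  have h2 : (i : ℝ) ≤ M := by exact_mod_cast hi
  have h3 : (0:ℝ) ≤ i := by positivity
  unfold rPt
  constructor <;> nlinarith

lemma rPt_idx {a b : ℝ} (hab : a < b) (M : ℕ) {x : ℝ} (hx : x ∈ Ioo a b) :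
    |rPt a b M (rIdx a b M x) - x| ≤ (b - a) / (M + 1) := by
  have hp := rH_pos hab M
  have h0 : 0 ≤ (x - a) / ((b - a) / (M + 1)) := div_nonneg (by linarith [hx.1]) hp.le
  have h1 := Nat.floor_le h0
  have h2 := Nat.lt_floor_add_one ((x - a) / ((b - a) / (M + 1)))
  rw [le_div_iff₀ hp] at h1
  rw [div_lt_iff₀ hp] at h2
  unfold rPt rIdx
  rw [abs_le]
  constructor <;> nlinarith

lemma rPt_tendsto {a b : ℝ} (hab : a < b) {x : ℝ} (hx : x ∈ Ioo a b) :
    Tendsto (fun M => rPt a b M (rIdx a b M x)) atTop (nhdsWithin x (Ioo a b)) := by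
  refine tendsto_nhdsWithin_iff.2 ⟨?_, Eventually.of_forall fun M => rPt_mem hab M (rIdx_le hab M hx)⟩
  rw [tendsto_iff_norm_sub_tendsto_zero]
  refine squeeze_zero (fun _ => norm_nonneg _) (fun M => rPt_idx hab M hx) ?_
  have := (tendsto_const_div_atTop_nhds_zero_nat (b - a)).comp (tendsto_add_atTop_nat 1)
  refine this.congr fun M => ?_
  simp

lemma rIdx_integral {a b : ℝ} (hab : a < b) (M : ℕ) (φ : ℕ → ℝ) :
    ∫ x in Ioo a b, φ (rIdx a b M x) = (b - a) / (M + 1) * ∑ i ∈ Finset.range (M+1), φ i := by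
  have hp := rH_pos hab M
  set h := (b - a) / ((M:ℝ) + 1) with hh
  have h1 : ((M:ℝ) + 1) * h = b - a := mul_div_cancel₀ _ (by positivity)
  let q : ℕ → ℝ := fun i => a + i * h
  have hval : ∀ i : ℕ, ∀ x ∈ Ioo (q i) (q (i+1)), φ (rIdx a b M x) = φ i := by
    intro i x hx
    congr 1
    unfold rIdx
    have hx1 : a + i * h < x := hx.1
    have hx2 : x < a + ((i+1 : ℕ):ℝ) * h := hx.2
    push_cast at hx2
    have hi : (0:ℝ) ≤ i := by positivity
    rw [Nat.floor_eq_iff (div_nonneg (by nlinarith) hp.le), le_div_iff₀ hp, div_lt_iff₀ hp]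
    constructor <;> linarith
  have hle : ∀ i, q i ≤ q (i+1) := by
    intro i; simp only [q]; push_cast; nlinarith
  have hae : ∀ i : ℕ, ∀ᵐ x ∂(volume.restrict (uIoc (q i) (q (i+1)))), φ (rIdx a b M x) = φ i := by
    intro i
    rw [uIoc_of_le (hle i), ← restrict_Ioo_eq_restrict_Ioc]
    exact (ae_restrict_iff' measurableSet_Ioo).2 (Eventually.of_forall (hval i))
  have hint : ∀ i : ℕ, IntervalIntegrable (fun x => φ (rIdx a b M x)) volume (q i) (q (i+1)) := by
    intro i
    refine (intervalIntegrable_const (c := φ i)).congr_ae ?_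
    filter_upwards [hae i] with x hx using hx.symm
  have hsum := intervalIntegral.sum_integral_adjacent_intervals (a := q) (n := M+1)
    (f := fun x => φ (rIdx a b M x)) (μ := volume) fun i _ => hint i
  have e0 : q 0 = a := by simp [q]
  have e1 : q (M+1) = b := by simp only [q]; push_cast; linarith
  rw [e0, e1, intervalIntegral.integral_of_le hab.le, integral_Ioc_eq_integral_Ioo] at hsum
  rw [← hsum, Finset.mul_sum]
  refine Finset.sum_congr rfl fun i _ => ?_
  have := intervalIntegral.integral_congr_ae_restrict (hae i)
  rw [this]
  simp only [intervalIntegral.integral_const, smul_eq_mul, q]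
  push_cast
  ring

lemma evar_le_of_mono {α : Type*} [LinearOrder α] {E : Type*} [NormedAddCommGroup E]
    (w : α → E) (G : α → ℝ) (s : Set α) (A B : ℝ) (hG : ∀ x ∈ s, G x ∈ Icc A B)
    (h : ∀ x ∈ s, ∀ y ∈ s, x ≤ y → ‖w y - w x‖ ≤ G y - G x) :
    eVariationOn w s ≤ ENNReal.ofReal (B - A) := by
  refine iSup_le ?_
  rintro ⟨n, p, hp, hps⟩
  simp only
  have h1 : ∀ i, edist (w (p (i+1))) (w (p i)) ≤ ENNReal.ofReal (G (p (i+1)) - G (p i)) := by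
    intro i
    rw [edist_dist, dist_eq_norm]
    exact ENNReal.ofReal_le_ofReal (h _ (hps _) _ (hps _) (hp (Nat.le_succ i)))
  refine (Finset.sum_le_sum fun i _ => h1 i).trans ?_
  rw [← ENNReal.ofReal_sum_of_nonneg]
  · refine ENNReal.ofReal_le_ofReal ?_
    rw [Finset.sum_range_sub (fun i => G (p i))]
    linarith [(hG _ (hps n)).2, (hG _ (hps 0)).1]
  · intro i _
    exact (norm_nonneg _).trans (h _ (hps _) _ (hps _) (hp (Nat.le_succ i)))

lemma norm_sub_le_sum {E : Type*} [NormedAddCommGroup E] (w : ℕ → E) {i j : ℕ} (hij : i ≤ j) :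
    ‖w j - w i‖ ≤ ∑ k ∈ Finset.range j, ‖w (k+1) - w k‖ - ∑ k ∈ Finset.range i, ‖w (k+1) - w k‖ := by
  induction j, hij using Nat.le_induction with
  | base => simp
  | succ j hj ih =>
    rw [Finset.sum_range_succ]
    have := norm_add_le (w (j+1) - w j) (w j - w i)
    rw [sub_add_sub_cancel] at this
    linarith

lemma evar_step {E : Type*} [NormedAddCommGroup E] {a b : ℝ} (hab : a < b) (M : ℕ) (w : ℕ → E) :
    eVariationOn (fun x => w (rIdx a b M x)) (Ioo a b)
      ≤ ENNReal.ofReal (∑ i ∈ Finset.range M, ‖w (i+1) - w i‖) := by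
  have := evar_le_of_mono (fun x => w (rIdx a b M x))
    (fun x => ∑ k ∈ Finset.range (rIdx a b M x), ‖w (k+1) - w k‖) (Ioo a b) 0
    (∑ i ∈ Finset.range M, ‖w (i+1) - w i‖) ?_ ?_
  · simpa using this
  · intro x hx
    refine ⟨Finset.sum_nonneg fun _ _ => norm_nonneg _, ?_⟩
    refine Finset.sum_le_sum_of_subset_of_nonneg ?_ fun _ _ _ => norm_nonneg _
    exact Finset.range_mono (rIdx_le hab M hx)
  · intro x _ y _ hxy
    exact norm_sub_le_sum w (rIdx_mono hab M hxy)

lemma evar_sample {E : Type*} [NormedAddCommGroup E] {a b : ℝ} (hab : a < b) (M : ℕ) (u : ℝ → E) :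
    ENNReal.ofReal (∑ i ∈ Finset.range M, ‖u (rPt a b M (i+1)) - u (rPt a b M i)‖)
      ≤ eVariationOn u (Ioo a b) := by
  have := eVariationOn.sum_le_of_monotoneOn_Iic (f := u) (s := Ioo a b) (n := M) (u := rPt a b M)
    ((rPt_mono hab M).monotoneOn _) (fun i hi => rPt_mem hab M hi)
  refine le_trans (le_of_eq ?_) this
  rw [ENNReal.ofReal_sum_of_nonneg fun _ _ => norm_nonneg _]
  refine Finset.sum_congr rfl fun i _ => ?_
  rw [edist_dist, dist_eq_norm]

lemma evar_mid {E : Type*} [NormedAddCommGroup E] [NormedSpace ℝ E] (u w : ℝ → E) (s : Set ℝ) :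
    eVariationOn (fun x => (1/2:ℝ) • (u x + w x)) s ≤
      ENNReal.ofReal (1/2) * (eVariationOn u s + eVariationOn w s) := by
  refine iSup_le ?_
  rintro ⟨n, p, hp, hps⟩
  simp only
  have h1 : ∀ i, edist ((1/2:ℝ) • (u (p (i+1)) + w (p (i+1)))) ((1/2:ℝ) • (u (p i) + w (p i))) ≤
      ENNReal.ofReal (1/2) * (edist (u (p (i+1))) (u (p i)) + edist (w (p (i+1))) (w (p i))) := by
    intro i
    rw [edist_dist, edist_dist, edist_dist, ← ENNReal.ofReal_add dist_nonneg dist_nonneg,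
      ← ENNReal.ofReal_mul (by norm_num)]
    refine ENNReal.ofReal_le_ofReal ?_
    rw [dist_smul₀, Real.norm_of_nonneg (by norm_num)]
    gcongr
    exact dist_add_add_le _ _ _ _
  refine (Finset.sum_le_sum fun i _ => h1 i).trans ?_
  rw [← Finset.mul_sum, Finset.sum_add_distrib]
  gcongr
  · exact eVariationOn.sum_le hp hps
  · exact eVariationOn.sum_le hp hps

lemma step_memLp {n : ℕ} {a b : ℝ} (hab : a < b) (M : ℕ) (w : ℕ → EuclideanSpace ℝ (Fin n)) :
    MemLp (fun x => w (rIdx a b M x)) 2 (volume.restrict (Ioo a b)) := by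
  have hm : Measurable (fun x => w (rIdx a b M x)) := (measurable_of_countable w).comp (rIdx_meas a b M)
  refine MemLp.of_bound hm.aestronglyMeasurable (∑ i ∈ Finset.range (M+1), ‖w i‖) ?_
  refine (ae_restrict_iff' measurableSet_Ioo).2 (Eventually.of_forall fun x hx => ?_)
  exact Finset.single_le_sum (f := fun i => ‖w i‖) (fun _ _ => norm_nonneg _)
    (Finset.mem_range.2 (Nat.lt_succ_iff.2 (rIdx_le hab M hx)))

lemma sqInt_memLp {n : ℕ} {a b : ℝ} {u : ℝ → EuclideanSpace ℝ (Fin n)} (hu : Measurable u)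
    (h : SqIntOn u (Ioo a b)) : MemLp u 2 (volume.restrict (Ioo a b)) :=
  (memLp_two_iff_integrable_sq_norm hu.aestronglyMeasurable).2 h

lemma memLp_sq {n : ℕ} {a b : ℝ} {u : ℝ → EuclideanSpace ℝ (Fin n)}
    (h : MemLp u 2 (volume.restrict (Ioo a b))) : IntegrableOn (fun x => ‖u x‖^2) (Ioo a b) :=
  (memLp_two_iff_integrable_sq_norm h.1).1 h

lemma min_finite {n : ℕ} {a b lam : ℝ} {f u : ℝ → EuclideanSpace ℝ (Fin n)}
    (hu : IsMinimizer lam a b f u) : eVariationOn u (Ioo a b) ≠ ⊤ := by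
  have h := hu.2.2 (fun _ => 0) measurable_const (by simp [SqIntOn])
  unfold rofEnergy at h
  rw [eVariationOn.constant_on (f := fun _ : ℝ => (0 : EuclideanSpace ℝ (Fin n)))
    (by rintro _ ⟨_, _, rfl⟩ _ ⟨_, _, rfl⟩; rfl)] at h
  exact ne_top_of_le_ne_top (by simp) (le_self_add.trans h)

lemma quad_growth {n : ℕ} {a b lam : ℝ} (hlam : 0 < lam) {f u W : ℝ → EuclideanSpace ℝ (Fin n)}
    (hf : MemLp f 2 (volume.restrict (Ioo a b)))
    (hu : IsMinimizer lam a b f u) (hW : Measurable W) (hW2 : MemLp W 2 (volume.restrict (Ioo a b)))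
    (TW : ℝ) (hTW0 : 0 ≤ TW) (hTW : eVariationOn W (Ioo a b) ≤ ENNReal.ofReal TW) :
    ∫ x in Ioo a b, ‖u x - W x‖^2 ≤ 4 * lam * (TW + (1/(2*lam)) * (∫ x in Ioo a b, ‖W x - f x‖^2)
      - ((eVariationOn u (Ioo a b)).toReal + (1/(2*lam)) * ∫ x in Ioo a b, ‖u x - f x‖^2)) := by
  have hu2 := sqInt_memLp hu.1 hu.2.1
  have hTu := min_finite hu
  have hm2 : MemLp (fun x => (1/2:ℝ) • (u x + W x)) 2 (volume.restrict (Ioo a b)) :=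
    (hu2.add hW2).const_smul (1/2:ℝ)
  have h1 := hu.2.2 (fun x => (1/2:ℝ) • (u x + W x)) ((hu.1.add hW).const_smul (1/2:ℝ)) (memLp_sq hm2)
  unfold rofEnergy at h1
  have h2 := (evar_mid u W (Ioo a b)).trans
    (mul_le_mul_right (add_le_add_right hTW (eVariationOn u (Ioo a b))) (ENNReal.ofReal (1/2)))
  set Tu := (eVariationOn u (Ioo a b)).toReal with hTudef
  have hTu' : eVariationOn u (Ioo a b) = ENNReal.ofReal Tu := (ENNReal.ofReal_toReal hTu).symm
  have hTu0 : 0 ≤ Tu := ENNReal.toReal_nonneg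
  have I1 := memLp_sq (hu2.sub hf)
  have I2 := memLp_sq (hW2.sub hf)
  have I3 := memLp_sq (hu2.sub hW2)
  simp only [Pi.sub_apply] at I1 I2 I3
  have hpar : ∫ x in Ioo a b, ‖(1/2:ℝ) • (u x + W x) - f x‖^2 =
      1/2 * (∫ x in Ioo a b, ‖u x - f x‖^2) + 1/2 * (∫ x in Ioo a b, ‖W x - f x‖^2)
        - 1/4 * ∫ x in Ioo a b, ‖u x - W x‖^2 := by
    have I12 : Integrable (fun x => 1/2 * ‖u x - f x‖^2 + 1/2 * ‖W x - f x‖^2) (volume.restrict (Ioo a b)) :=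
      (I1.const_mul _).add (I2.const_mul _)
    rw [← integral_const_mul, ← integral_const_mul, ← integral_const_mul,
      ← integral_add (I1.const_mul _) (I2.const_mul _),
      ← integral_sub I12 (I3.const_mul _)]
    congr 1
    funext x
    have e1 : (1/2:ℝ) • (u x + W x) - f x = (1/2:ℝ) • ((u x - f x) + (W x - f x)) := by
      module
    have e2 : u x - W x = (u x - f x) - (W x - f x) := by abel
    rw [e1, e2, norm_smul, mul_pow, norm_add_sq_real,
      norm_sub_sq_real (u x - f x) (W x - f x), Real.norm_of_nonneg (by norm_num)]
    ring
  have p1 : 0 ≤ ∫ x in Ioo a b, ‖(1/2:ℝ) • (u x + W x) - f x‖^2 := integral_nonneg fun _ => by positivity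
  have p2 : 0 ≤ ∫ x in Ioo a b, ‖u x - f x‖^2 := integral_nonneg fun _ => by positivity
  rw [hTu', ← ENNReal.ofReal_add hTu0 hTW0, ← ENNReal.ofReal_mul (by norm_num)] at h2
  have h3 := h1.trans (add_le_add_left h2 _)
  rw [hTu', ← ENNReal.ofReal_add hTu0 (by positivity), ← ENNReal.ofReal_add (by positivity) (by positivity),
    ENNReal.ofReal_le_ofReal_iff (by positivity), hpar] at h3
  have e : 4 * lam * (1/(2*lam)) = 2 := by field_simp; norm_num
  have h4 := mul_le_mul_of_nonneg_left h3 (by positivity : 0 ≤ 8 * lam)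
  set A := ∫ x in Ioo a b, ‖u x - f x‖^2
  set B := ∫ x in Ioo a b, ‖W x - f x‖^2
  set C := ∫ x in Ioo a b, ‖u x - W x‖^2
  have g1 : 8 * lam * (Tu + 1/(2*lam) * A) = 8*lam*Tu + 4*A := by field_simp; ring
  have g2 : 8 * lam * (1/2*(Tu+TW) + 1/(2*lam) * (1/2*A+1/2*B-1/4*C)) = 4*lam*(Tu+TW) + 2*A+2*B-C := by
    field_simp; ring
  have g3 : 4 * lam * (TW + 1/(2*lam)*B - (Tu + 1/(2*lam)*A)) = 4*lam*(TW-Tu) + 2*B-2*A := by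
    field_simp; ring
  rw [g1, g2] at h4
  rw [g3]
  linarith

lemma young_int {n : ℕ} {a b δ : ℝ} (hδ : 0 < δ) {p q : ℝ → EuclideanSpace ℝ (Fin n)}
    (hp : MemLp p 2 (volume.restrict (Ioo a b))) (hq : MemLp q 2 (volume.restrict (Ioo a b))) :
    ∫ x in Ioo a b, ‖p x + q x‖^2 ≤
      (1+δ) * (∫ x in Ioo a b, ‖p x‖^2) + (1+1/δ) * (∫ x in Ioo a b, ‖q x‖^2) := by
  have I1 := memLp_sq hp
  have I2 := memLp_sq hq
  have I3 := memLp_sq (hp.add hq)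
  simp only [Pi.add_apply] at I3
  rw [← integral_const_mul, ← integral_const_mul, ← integral_add (I1.const_mul _) (I2.const_mul _)]
  refine integral_mono I3 ((I1.const_mul _).add (I2.const_mul _)) fun x => ?_
  simp only [Pi.add_apply]
  have h1 : ‖p x + q x‖^2 ≤ (‖p x‖ + ‖q x‖)^2 := by
    gcongr; exact norm_add_le _ _
  have h2 : 0 ≤ (δ * ‖p x‖ - ‖q x‖)^2 / δ := by positivity
  have h3 : (δ * ‖p x‖ - ‖q x‖)^2 / δ = δ * ‖p x‖^2 - 2 * ‖p x‖ * ‖q x‖ + 1/δ * ‖q x‖^2 := by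
    field_simp
    ring
  nlinarith

lemma tendsto_of_young {X s : ℕ → ℝ} {C : ℝ} (hC : 0 ≤ C) (hX : ∀ M, 0 ≤ X M)
    (hs : Tendsto s atTop (nhds 0))
    (h : ∀ δ : ℝ, 0 < δ → δ ≤ 1 → ∃ K, ∀ M, X M ≤ C * δ + K * s M) :
    Tendsto X atTop (nhds 0) := by
  rw [Metric.tendsto_atTop]
  intro ε hε
  have hδ : 0 < min 1 (ε / (2 * (C+1))) := lt_min one_pos (by positivity)
  obtain ⟨K, hK⟩ := h _ hδ (min_le_left _ _)
  have hlim : Tendsto (fun M => K * s M) atTop (nhds 0) := by simpa using hs.const_mul K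
  obtain ⟨N, hN⟩ := (Metric.tendsto_atTop.1 hlim) (ε/2) (by positivity)
  refine ⟨N, fun M hM => ?_⟩
  have h1 := hN M hM
  rw [Real.dist_eq, sub_zero] at h1 ⊢
  rw [abs_of_nonneg (hX M)]
  have h2 := hK M
  have h3 : C * min 1 (ε / (2 * (C+1))) ≤ ε / 2 := by
    calc C * min 1 (ε / (2 * (C+1))) ≤ (C+1) * (ε / (2 * (C+1))) :=
          mul_le_mul (by linarith) (min_le_right _ _) hδ.le (by linarith)
      _ = ε/2 := by field_simp
  linarith [le_abs_self (K * s M)]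

lemma sample_tendsto {n : ℕ} {a b : ℝ} (hab : a < b) (v : ℝ → EuclideanSpace ℝ (Fin n))
    (hv : Measurable v) (B : ℝ) (hB : ∀ x ∈ Ioo a b, ∀ y ∈ Ioo a b, ‖v x - v y‖ ≤ B)
    (hc : ∀ᵐ x ∂(volume.restrict (Ioo a b)), ContinuousWithinAt v (Ioo a b) x) :
    Tendsto (fun M => ∫ x in Ioo a b, ‖v (rPt a b M (rIdx a b M x)) - v x‖^2) atTop (nhds 0) := by
  have h0 : (0:ℝ) = ∫ x in Ioo a b, (0:ℝ) := by simp
  rw [h0]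
  refine tendsto_integral_of_dominated_convergence (fun _ => B^2) ?_ ?_ ?_ ?_
  · intro M
    have : Measurable (fun x => v (rPt a b M (rIdx a b M x))) :=
      (measurable_of_countable (fun i => v (rPt a b M i))).comp (rIdx_meas a b M)
    exact ((this.sub hv).norm.pow_const 2).aestronglyMeasurable
  · exact integrable_const _
  · intro M
    refine (ae_restrict_iff' measurableSet_Ioo).2 (Eventually.of_forall fun x hx => ?_)
    rw [Real.norm_of_nonneg (by positivity)]
    have := hB _ (rPt_mem hab M (rIdx_le hab M hx)) x hx
    gcongr
  · filter_upwards [hc, ae_restrict_mem measurableSet_Ioo] with x hx hxm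
    have h1 := (hx.tendsto.comp (rPt_tendsto hab hxm)).sub_const (v x)
    have h2 := (h1.norm).pow 2
    simpa using h2

lemma arith_fin {lam δ TW Tu Q P1 P2 P3 P4 P5 e k : ℝ} (hlam : 0 ≤ lam) (hδ : 0 < δ) (hδ1 : δ ≤ 1)
    (hTW0 : 0 ≤ TW) (hQ0 : 0 ≤ Q) (he0 : 0 ≤ e) (hk0 : 0 ≤ k)
    (y1 : P1 ≤ (1+δ) * P2 + (1+1/δ) * e) (y2 : P3 ≤ (1+δ) * Q + (1+1/δ) * P4)
    (y3 : P4 ≤ (1+1) * k + (1+1/1) * e) (h7 : 2 * lam * TW + P2 ≤ 2 * lam * Tu + P3)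
    (h8 : P5 ≤ 4*lam*TW + 2*P1 - 4*lam*Tu - 2*Q) :
    P5 ≤ (4 * lam * Tu + 6 * Q) * δ +
      (2 * (1+1/δ) + 2 * (1 + δ) * ((1+1/δ) * ((1+1) + (1+1/1)))) * (e + k) := by
  have hD : 0 ≤ 1 + 1/δ := by positivity
  generalize 1 + 1/δ = D at *
  have z1 : P4 ≤ ((1+1) + (1+1/1)) * (e + k) := by linarith
  have z2 : P3 ≤ (1+δ) * Q + D * (((1+1) + (1+1/1)) * (e + k)) := by
    linarith [mul_le_mul_of_nonneg_left z1 hD]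
  have z3 : (1+δ) * (2 * lam * TW + P2) ≤
      (1+δ) * (2 * lam * Tu + ((1+δ) * Q + D * (((1+1) + (1+1/1)) * (e + k)))) :=
    mul_le_mul_of_nonneg_left (by linarith) (by linarith)
  have z4 : 0 ≤ δ * (2 * lam * TW) := by positivity
  have z5 : δ * δ * Q ≤ δ * Q := by
    have : δ * δ ≤ δ := by nlinarith
    exact mul_le_mul_of_nonneg_right this hQ0
  have z6 : 0 ≤ D * k := by positivity
  linarith

lemma conv_main {n : ℕ} {a b lam : ℝ} (hab : a < b) (hlam : 0 < lam)
    {f u : ℝ → EuclideanSpace ℝ (Fin n)} (hf_meas : Measurable f)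
    (hf_sq : SqIntOn f (Ioo a b)) (hfc : ContinuousOn f (Icc a b))
    (hu : IsMinimizer lam a b f u) (G : ℝ → ℝ)
    (hG : ∀ x ∈ Ioo a b, ∀ y ∈ Ioo a b, x ≤ y → ‖f y - f x‖ ≤ G y - G x) :
    ∃ W : ℕ → ℝ → EuclideanSpace ℝ (Fin n), (∀ M, MemLp (W M) 2 (volume.restrict (Ioo a b))) ∧
      Tendsto (fun M => ∫ x in Ioo a b, ‖u x - W M x‖^2) atTop (nhds 0) ∧
      ∀ M, ∀ x ∈ Ioo a b, ∀ y ∈ Ioo a b, x ≤ y →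
        ‖W M y - W M x‖ ≤ G (rPt a b M (rIdx a b M y)) - G (rPt a b M (rIdx a b M x)) := by
  have hcpos : ∀ M : ℕ, 0 < (b - a) / ((M:ℝ) + 1) / (2 * lam) := fun M =>
    div_pos (rH_pos hab M) (by positivity)
  choose w hw using fun M : ℕ => dF_exists M ((b - a) / ((M:ℝ) + 1) / (2 * lam)) (hcpos M)
    (fun i => f (rPt a b M i))
  have hu2 := sqInt_memLp hu.1 hu.2.1
  have hf2 := sqInt_memLp hf_meas hf_sq
  have hTu := min_finite hu
  refine ⟨fun M x => w M (rIdx a b M x), fun M => step_memLp hab M _, ?_, ?_⟩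
  · -- convergence
    set Tu := (eVariationOn u (Ioo a b)).toReal with hTudef
    have hTu' : eVariationOn u (Ioo a b) = ENNReal.ofReal Tu := (ENNReal.ofReal_toReal hTu).symm
    have hTu0 : 0 ≤ Tu := ENNReal.toReal_nonneg
    set Q := ∫ x in Ioo a b, ‖u x - f x‖^2 with hQ
    have hQ0 : 0 ≤ Q := integral_nonneg fun _ => by positivity
    let eM : ℕ → ℝ := fun M => ∫ x in Ioo a b, ‖f (rPt a b M (rIdx a b M x)) - f x‖^2
    let kM : ℕ → ℝ := fun M => ∫ x in Ioo a b, ‖u (rPt a b M (rIdx a b M x)) - u x‖^2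
    have he : Tendsto eM atTop (nhds 0) := by
      obtain ⟨C, hC⟩ := (isCompact_Icc.image_of_continuousOn hfc).isBounded.exists_norm_le
      refine sample_tendsto hab f hf_meas (C + C) ?_ ?_
      · intro x hx y hy
        exact (norm_sub_le _ _).trans (add_le_add (hC _ ⟨x, Ioo_subset_Icc_self hx, rfl⟩)
          (hC _ ⟨y, Ioo_subset_Icc_self hy, rfl⟩))
      · refine (ae_restrict_iff' measurableSet_Ioo).2 (Eventually.of_forall fun x hx => ?_)
        exact (hfc x (Ioo_subset_Icc_self hx)).mono Ioo_subset_Icc_self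
    have hk : Tendsto kM atTop (nhds 0) := by
      refine sample_tendsto hab u hu.1 Tu ?_ ?_
      · intro x hx y hy
        rw [← dist_eq_norm]
        exact BoundedVariationOn.dist_le hTu hx hy
      · have hbv : LocallyBoundedVariationOn u (Ioo a b) :=
          BoundedVariationOn.locallyBoundedVariationOn hTu
        refine (ae_restrict_iff' measurableSet_Ioo).2 ?_
        filter_upwards [hbv.ae_differentiableWithinAt_of_mem] with x hx hxm
        exact (hx hxm).continuousWithinAt
    have hs : Tendsto (fun M => eM M + kM M) atTop (nhds 0) := by simpa using he.add hk
    refine tendsto_of_young (C := 4 * lam * Tu + 6 * Q) (by positivity)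
      (fun M => integral_nonneg fun _ => by positivity) hs ?_
    intro δ hδ hδ1
    refine ⟨2 * (1+1/δ) + 2 * (1 + δ) * ((1+1/δ) * ((1+1) + (1+1/1))), fun M => ?_⟩
    have he0 : 0 ≤ eM M := integral_nonneg fun _ => by positivity
    have hk0 : 0 ≤ kM M := integral_nonneg fun _ => by positivity
    have mW := step_memLp hab M (w M)
    have mF := step_memLp hab M (fun i => f (rPt a b M i))
    have mU := step_memLp hab M (fun i => u (rPt a b M i))
    set TW := ∑ i ∈ Finset.range M, ‖w M (i+1) - w M i‖ with hTW
    have hTW0 : 0 ≤ TW := Finset.sum_nonneg fun _ _ => norm_nonneg _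
    have h1 := quad_growth hlam hf2 hu ((measurable_of_countable (w M)).comp (rIdx_meas a b M)) mW TW
      hTW0 (evar_step hab M (w M))
    simp only [Function.comp_apply] at h1
    have h2 := hw M (fun i => u (rPt a b M i))
    unfold dF at h2
    have h3 := evar_sample hab M u
    rw [hTu', ENNReal.ofReal_le_ofReal_iff hTu0] at h3
    have h4 := rIdx_integral hab M (fun i => ‖w M i - f (rPt a b M i)‖^2)
    have h5 := rIdx_integral hab M (fun i => ‖u (rPt a b M i) - f (rPt a b M i)‖^2)
    have y1 := young_int hδ (mW.sub mF) (mF.sub hf2)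
    simp only [Pi.sub_apply, sub_add_sub_cancel] at y1
    have y2 := young_int hδ (hu2.sub hf2) ((mU.sub hu2).add (hf2.sub mF))
    have y3 := young_int one_pos (mU.sub hu2) (hf2.sub mF)
    simp only [Pi.sub_apply, Pi.add_apply] at y2 y3
    have e1 : ∫ x in Ioo a b, ‖f x - f (rPt a b M (rIdx a b M x))‖^2 = eM M := by
      simp only [eM]; congr 1; funext x; rw [norm_sub_rev]
    have e2 : ∀ x, u x - f x + (u (rPt a b M (rIdx a b M x)) - u x + (f x - f (rPt a b M (rIdx a b M x))))
      = u (rPt a b M (rIdx a b M x)) - f (rPt a b M (rIdx a b M x)) := by intro x; abel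
    simp only [e2] at y2
    rw [e1] at y3
    change _ ≤ (1 + 1) * kM M + _ at y3
    change _ ≤ _ + (1 + 1/δ) * eM M at y1
    rw [← hQ] at y2 h1
    set S1 := ∑ i ∈ Finset.range (M+1), ‖w M i - f (rPt a b M i)‖^2
    set S2 := ∑ i ∈ Finset.range (M+1), ‖u (rPt a b M i) - f (rPt a b M i)‖^2
    set P1 := ∫ x in Ioo a b, ‖w M (rIdx a b M x) - f x‖^2
    set P2 := ∫ x in Ioo a b, ‖w M (rIdx a b M x) - f (rPt a b M (rIdx a b M x))‖^2
    set P3 := ∫ x in Ioo a b, ‖u (rPt a b M (rIdx a b M x)) - f (rPt a b M (rIdx a b M x))‖^2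
    set P4 := ∫ x in Ioo a b, ‖u (rPt a b M (rIdx a b M x)) - u x + (f x - f (rPt a b M (rIdx a b M x)))‖^2
    set P5 := ∫ x in Ioo a b, ‖u x - w M (rIdx a b M x)‖^2
    have h6 : TW + 1/(2*lam) * P2 ≤ Tu + 1/(2*lam) * P3 := by
      have g1 : (b - a) / ((M:ℝ) + 1) / (2 * lam) * S1 = 1/(2*lam) * P2 := by rw [h4]; ring
      have g2 : (b - a) / ((M:ℝ) + 1) / (2 * lam) * S2 = 1/(2*lam) * P3 := by rw [h5]; ring
      rw [g1, g2] at h2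
      linarith
    have h7 : 2 * lam * TW + P2 ≤ 2 * lam * Tu + P3 := by
      have := mul_le_mul_of_nonneg_left h6 (by positivity : 0 ≤ 2 * lam)
      have g1 : 2 * lam * (TW + 1/(2*lam) * P2) = 2 * lam * TW + P2 := by field_simp
      have g2 : 2 * lam * (Tu + 1/(2*lam) * P3) = 2 * lam * Tu + P3 := by field_simp
      rwa [g1, g2] at this
    have h8 : P5 ≤ 4*lam*TW + 2*P1 - 4*lam*Tu - 2*Q := by
      have g3 : 4 * lam * (TW + 1/(2*lam)*P1 - (Tu + 1/(2*lam)*Q)) = 4*lam*TW + 2*P1 - 4*lam*Tu - 2*Q := by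
        field_simp; ring
      rwa [g3] at h1
    exact arith_fin hlam.le hδ hδ1 hTW0 hQ0 he0 hk0 y1 y2 y3 h7 h8
  · -- estimate
    intro M x hx y hy hxy
    have hij := rIdx_mono hab M hxy
    have hjM := rIdx_le hab M hy
    beta_reduce
    generalize rIdx a b M x = i at hij ⊢
    generalize rIdx a b M y = j at hij hjM ⊢
    induction j, hij using Nat.le_induction with
    | base => simp
    | succ j hj ih =>
      have ih' := ih (by omega)
      have h1 := dF_est M _ (hcpos M) _ _ (hw M) j (by omega)
      have h2 := hG _ (rPt_mem hab M (by omega : j ≤ M)) _ (rPt_mem hab M hjM) (rPt_mono hab M (Nat.le_succ j))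
      have h3 := norm_add_le (w M (j+1) - w M j) (w M j - w M i)
      rw [sub_add_sub_cancel] at h3
      linarith

/-- for `f ∈ H¹(I,ℝⁿ)` with derivative `f'`, the ROF minimizer `u` has a
representative whose total variation over every closed ball `[x₀−r, x₀+r] ⊆ I` is at most
`∫_{x₀−r}^{x₀+r} ‖f'‖`. -/
theorem tv_minimizer_le_integral_datum_derivative_on_balls
    {n : ℕ} (hn : 1 ≤ n) (a b : ℝ) (hab : a < b) (lam : ℝ) (hlam : 0 < lam)
    (f f' : ℝ → EuclideanSpace ℝ (Fin n)) (hf_meas : Measurable f)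
    (hf_sq : SqIntOn f (Set.Ioo a b)) (hf : InH1 a b f f')
    (u : ℝ → EuclideanSpace ℝ (Fin n)) (hu : IsMinimizer lam a b f u) :
    ∃ ubar : ℝ → EuclideanSpace ℝ (Fin n),
      (∀ᵐ x ∂(MeasureTheory.volume.restrict (Set.Ioo a b)), ubar x = u x) ∧
      ∀ x₀ ∈ Set.Ioo a b, ∀ r : ℝ, 0 < r → Set.Icc (x₀ - r) (x₀ + r) ⊆ Set.Ioo a b →
        eVariationOn ubar (Set.Icc (x₀ - r) (x₀ + r))
          ≤ ENNReal.ofReal (∫ x in (x₀ - r)..(x₀ + r), ‖f' x‖) := by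
  obtain ⟨hfc, hf'2, hftc⟩ := hf
  have hf'1 : IntegrableOn (fun x => ‖f' x‖) (Ioo a b) := by
    have hm : AEStronglyMeasurable (fun x => ‖f' x‖) (volume.restrict (Ioo a b)) := by
      have := (Real.continuous_sqrt.comp_aestronglyMeasurable hf'2.1)
      refine this.congr (Eventually.of_forall fun x => ?_)
      simp [Real.sqrt_sq (norm_nonneg _)]
    refine Integrable.mono' (hf'2.add (integrable_const (1:ℝ))) hm (Eventually.of_forall fun x => ?_)
    simp only [Pi.add_apply, norm_norm]
    nlinarith [sq_nonneg (‖f' x‖ - 1), norm_nonneg (f' x)]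
  have hii : IntervalIntegrable (fun x => ‖f' x‖) volume a b :=
    (intervalIntegrable_iff_integrableOn_Ioo_of_le hab.le).2 hf'1
  have hsub : ∀ x ∈ Ioo a b, ∀ y ∈ Ioo a b, IntervalIntegrable (fun x => ‖f' x‖) volume x y := by
    intro x hx y hy
    refine hii.mono_set ?_
    rw [uIcc_of_le hab.le]
    exact uIcc_subset_Icc (Ioo_subset_Icc_self hx) (Ioo_subset_Icc_self hy)
  have hsuba : ∀ x ∈ Ioo a b, IntervalIntegrable (fun x => ‖f' x‖) volume a x := by
    intro x hx
    refine hii.mono_set ?_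
    rw [uIcc_of_le hab.le]
    exact uIcc_subset_Icc (left_mem_Icc.2 hab.le) (Ioo_subset_Icc_self hx)
  let G : ℝ → ℝ := fun x => ∫ t in a..x, ‖f' t‖
  have hGsub : ∀ x ∈ Ioo a b, ∀ y ∈ Ioo a b, G y - G x = ∫ t in x..y, ‖f' t‖ := by
    intro x hx y hy
    exact intervalIntegral.integral_interval_sub_left (hsuba y hy) (hsuba x hx)
  have hGest : ∀ x ∈ Ioo a b, ∀ y ∈ Ioo a b, x ≤ y → ‖f y - f x‖ ≤ G y - G x := by
    intro x hx y hy hxy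
    rw [hGsub x hx y hy, hftc x (Ioo_subset_Icc_self hx) y (Ioo_subset_Icc_self hy)]
    exact intervalIntegral.norm_integral_le_integral_norm hxy
  have hGc : ContinuousOn G (Ioo a b) := by
    have : ContinuousOn G (uIcc a b) := by
      refine intervalIntegral.continuousOn_primitive_interval ?_
      rw [uIcc_of_le hab.le, integrableOn_Icc_iff_integrableOn_Ioo]
      exact hf'1
    rw [uIcc_of_le hab.le] at this
    exact this.mono Ioo_subset_Icc_self
  obtain ⟨W, hW2, hWlim, hWest⟩ := conv_main hab hlam hf_meas hf_sq hfc hu G hGest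
  have hu2 := sqInt_memLp hu.1 hu.2.1
  -- subsequence converging almost everywhere
  obtain ⟨ns, hns, hae⟩ : ∃ ns : ℕ → ℕ, StrictMono ns ∧ ∀ᵐ x ∂(volume.restrict (Ioo a b)),
      Tendsto (fun i => W (ns i) x) atTop (nhds (u x)) := by
    have hI : ∀ M, IntegrableOn (fun x => ‖u x - W M x‖^2) (Ioo a b) := fun M => memLp_sq (hu2.sub (hW2 M))
    have hmeas : TendstoInMeasure (volume.restrict (Ioo a b)) (fun M x => ‖u x - W M x‖^2) atTop (fun _ => (0:ℝ)) := by
      refine tendstoInMeasure_of_tendsto_eLpNorm (p := 1) one_ne_zero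
        (fun M => (hI M).1) aestronglyMeasurable_const ?_
      have : Tendsto (fun M => ENNReal.ofReal (∫ x in Ioo a b, ‖u x - W M x‖^2)) atTop (nhds 0) := by
        simpa using ENNReal.tendsto_ofReal hWlim
      refine this.congr fun M => ?_
      rw [eLpNorm_one_eq_lintegral_enorm, ofReal_integral_eq_lintegral_ofReal (hI M)
        (Eventually.of_forall fun x => by positivity)]
      refine lintegral_congr fun x => ?_
      simp only [Pi.sub_apply, sub_zero]
      rw [Real.enorm_of_nonneg (by positivity)]
    obtain ⟨ns, hns, h⟩ := hmeas.exists_seq_tendsto_ae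
    refine ⟨ns, hns, ?_⟩
    filter_upwards [h] with x hx
    rw [tendsto_iff_norm_sub_tendsto_zero]
    have := (Real.continuous_sqrt.tendsto 0).comp hx
    rw [Real.sqrt_zero] at this
    refine this.congr fun i => ?_
    simp only [Function.comp_apply]
    rw [Real.sqrt_sq (norm_nonneg _), norm_sub_rev]
  let D : Set ℝ := {x | x ∈ Ioo a b ∧ Tendsto (fun i => W (ns i) x) atTop (nhds (u x))}
  have hDae : ∀ᵐ x ∂(volume.restrict (Ioo a b)), x ∈ D := by
    filter_upwards [hae, ae_restrict_mem measurableSet_Ioo] with x h1 h2 using ⟨h2, h1⟩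
  have hDest0 : ∀ x ∈ D, ∀ y ∈ D, x ≤ y → ‖u y - u x‖ ≤ G y - G x := by
    intro x hx y hy hxy
    have hGlim : ∀ z ∈ Ioo a b, Tendsto (fun i => G (rPt a b (ns i) (rIdx a b (ns i) z))) atTop (nhds (G z)) :=
      fun z hz => (hGc z hz).tendsto.comp ((rPt_tendsto hab hz).comp hns.tendsto_atTop)
    exact le_of_tendsto_of_tendsto' (hy.2.sub hx.2).norm ((hGlim y hy.1).sub (hGlim x hx.1))
      fun i => hWest _ x hx.1 y hy.1 hxy
  have hDest : ∀ x ∈ D, ∀ y ∈ D, dist (u x) (u y) ≤ dist (G x) (G y) := by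
    intro x hx y hy
    rcases le_total x y with h | h
    · rw [dist_comm, dist_comm (G x), dist_eq_norm, Real.dist_eq]
      exact (hDest0 x hx y hy h).trans (le_abs_self _)
    · rw [dist_eq_norm, Real.dist_eq]
      exact (hDest0 y hy x hx h).trans (le_abs_self _)
  have hDcl : Ioo a b ⊆ closure D := by
    intro x hx
    rw [mem_closure_iff_nhds]
    intro t ht
    by_contra hcon
    rw [not_nonempty_iff_eq_empty] at hcon
    obtain ⟨o, hot, ho, hxo⟩ := mem_nhds_iff.1 (inter_mem ht (isOpen_Ioo.mem_nhds hx))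
    have h1 := ho.measure_pos volume ⟨x, hxo⟩
    have h2 : volume {y | ¬ (y ∈ Ioo a b → y ∈ D)} = 0 := (ae_restrict_iff' measurableSet_Ioo).1 hDae
    have h3 : o ⊆ {y | ¬ (y ∈ Ioo a b → y ∈ D)} := by
      intro y hy hyD
      have : y ∈ t ∩ D := ⟨(hot hy).1, hyD (hot hy).2⟩
      rw [hcon] at this
      exact this
    exact h1.ne' (measure_mono_null h3 h2)
  have hDI : D ⊆ Ioo a b := fun x hx => hx.1
  have hlimex : ∀ x ∈ Ioo a b, ∃ l, Tendsto u (nhdsWithin x D) (nhds l) := by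
    intro x hx
    haveI : (nhdsWithin x D).NeBot := mem_closure_iff_nhdsWithin_neBot.1 (hDcl hx)
    rw [← cauchy_map_iff_exists_tendsto, Metric.cauchy_iff]
    refine ⟨inferInstance, fun ε hε => ?_⟩
    have hGt : Tendsto G (nhdsWithin x D) (nhds (G x)) :=
      (hGc x hx).tendsto.mono_left (nhdsWithin_mono x hDI)
    have h1 := hGt (Metric.ball_mem_nhds (G x) (half_pos hε))
    refine ⟨u '' (G ⁻¹' (Metric.ball (G x) (ε/2)) ∩ D),
      image_mem_map (inter_mem h1 self_mem_nhdsWithin), ?_⟩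
    rintro _ ⟨p, ⟨hp, hpD⟩, rfl⟩ _ ⟨q, ⟨hq, hqD⟩, rfl⟩
    have h2 := hDest p hpD q hqD
    have h3 := dist_triangle_right (G p) (G q) (G x)
    have h4 : dist (G p) (G x) < ε/2 := hp
    have h5 : dist (G q) (G x) < ε/2 := hq
    linarith
  refine ⟨extendFrom D u, ?_, ?_⟩
  · filter_upwards [hDae] with x hx
    refine extendFrom_eq (subset_closure hx) ?_
    rw [tendsto_iff_dist_tendsto_zero]
    have hGt : Tendsto G (nhdsWithin x D) (nhds (G x)) :=
      (hGc x hx.1).tendsto.mono_left (nhdsWithin_mono x hDI)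
    refine squeeze_zero' (Eventually.of_forall fun _ => dist_nonneg) ?_ (tendsto_iff_dist_tendsto_zero.1 hGt)
    filter_upwards [self_mem_nhdsWithin] with y hy using hDest y hy x hx
  · intro x₀ hx₀ r hr hI
    have hGmono : ∀ x ∈ Ioo a b, ∀ y ∈ Ioo a b, x ≤ y → G x ≤ G y := fun x hx y hy hxy => by
      have := (norm_nonneg _).trans (hGest x hx y hy hxy)
      linarith
    have hl : x₀ - r ∈ Icc (x₀ - r) (x₀ + r) := ⟨le_rfl, by linarith⟩
    have hrr : x₀ + r ∈ Icc (x₀ - r) (x₀ + r) := ⟨by linarith, le_rfl⟩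
    rw [← hGsub _ (hI hl) _ (hI hrr)]
    refine evar_le_of_mono _ G _ _ _ ?_ ?_
    · intro x hx
      exact ⟨hGmono _ (hI hl) _ (hI hx) hx.1, hGmono _ (hI hx) _ (hI hrr) hx.2⟩
    · intro x hx y hy hxy
      have hx' := hI hx
      have hy' := hI hy
      haveI : (nhdsWithin x D).NeBot := mem_closure_iff_nhdsWithin_neBot.1 (hDcl hx')
      haveI : (nhdsWithin y D).NeBot := mem_closure_iff_nhdsWithin_neBot.1 (hDcl hy')
      have tx := tendsto_extendFrom (hlimex x hx')
      have ty := tendsto_extendFrom (hlimex y hy')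
      have gx : Tendsto G (nhdsWithin x D) (nhds (G x)) :=
        (hGc x hx').tendsto.mono_left (nhdsWithin_mono x hDI)
      have gy : Tendsto G (nhdsWithin y D) (nhds (G y)) :=
        (hGc y hy').tendsto.mono_left (nhdsWithin_mono y hDI)
      have key : dist (extendFrom D u x) (extendFrom D u y) ≤ dist (G x) (G y) := by
        refine le_of_tendsto_of_tendsto
          ((tx.comp tendsto_fst).dist (ty.comp tendsto_snd) (f := fun p : ℝ × ℝ => u p.1) (g := fun p : ℝ × ℝ => u p.2))
          ((gx.comp tendsto_fst).dist (gy.comp tendsto_snd) (f := fun p : ℝ × ℝ => G p.1) (g := fun p : ℝ × ℝ => G p.2)) ?_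
          (b := nhdsWithin x D ×ˢ nhdsWithin y D)
        have : D ×ˢ D ∈ nhdsWithin x D ×ˢ nhdsWithin y D :=
          prod_mem_prod self_mem_nhdsWithin self_mem_nhdsWithin
        filter_upwards [this] with p hp
        exact hDest _ hp.1 _ hp.2
      rw [dist_comm, dist_comm (G x), dist_eq_norm, Real.dist_eq,
        abs_of_nonneg (by linarith [hGmono x hx' y hy' hxy])] at key
      exact key
end
end
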